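/- Let s ∈ ℂ with −1 < Re s < 1 and s ≠ 0, and let x > 0 be real. Define, for t > 0, Φ(t,s) := 2 ∑_{n=1}^∞ σ_{−s}(n) n^{s/2} K_s(4π√(nt)) − Γ(1+s)ζ(1+s)·t^{−1−s/2}/(2π)^{2+s} − Γ(1−s)ζ(1−s)·t^{−1+s/2}/(2π)^{2−s}, η(t,s) := 2i ∑_{n=1}^∞ σ_{−s}(n) n^{s/2} ( e^{πis/4} K_s(4π e^{iπ/4} √(nt)) − e^{−πis/4} K_s(4π e^{−iπ/4} √(nt)) ), and κ(t,s) := η(t,s) − (1/(2π²t))·( Γ(1+s)ζ(1+s)·(2π√t)^{−s} + Γ(1−s)ζ(1−s)·cos(πs/2)·(2π√t)^{s} ). Then Φ(x,s) = (x^{−s/2}/π) ∫_0^∞ t^{1+s/2}·κ(t,s)/(t² + x²) dt. -/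

import Mathlib

open Complex Finset MeasureTheory
open scoped Real BigOperators Classical

/-- Generalized divisor sum `σ_s(n) = ∑_{d ∣ n} d^s` with complex exponent. -/
noncomputable def csigma (s : ℂ) (n : ℕ) : ℂ := ∑ d ∈ n.divisors, (d : ℂ) ^ s

/-- The modified Bessel function of the second kind,
`K_ν(z) = ∫_0^∞ e^{-z cosh t} cosh(ν t) dt` (for `Re z > 0`). -/
noncomputable def Kbes (ν z : ℂ) : ℂ :=
  ∫ t in Set.Ioi (0 : ℝ), Complex.exp (-z * (Real.cosh t : ℂ)) * Complex.cosh (ν * (t : ℂ))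

/-- `Φ(t,s)`. -/
noncomputable def PhiK (t : ℝ) (s : ℂ) : ℂ :=
  2 * (∑' n : ℕ, csigma (-s) (n + 1) * ((n : ℂ) + 1) ^ (s / 2) *
      Kbes s ((4 * π * Real.sqrt (((n : ℝ) + 1) * t) : ℝ) : ℂ))
    - Complex.Gamma (1 + s) * riemannZeta (1 + s) * (t : ℂ) ^ (-1 - s / 2) /
        ((2 * π : ℝ) : ℂ) ^ (2 + s)
    - Complex.Gamma (1 - s) * riemannZeta (1 - s) * (t : ℂ) ^ (-1 + s / 2) /
        ((2 * π : ℝ) : ℂ) ^ (2 - s)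

/-- `η(t,s)`. -/
noncomputable def etaK (t : ℝ) (s : ℂ) : ℂ :=
  2 * Complex.I * ∑' n : ℕ, csigma (-s) (n + 1) * ((n : ℂ) + 1) ^ (s / 2) *
    (Complex.exp ((π : ℂ) * Complex.I * s / 4) *
        Kbes s (4 * (π : ℂ) * Complex.exp ((π : ℂ) * Complex.I / 4) *
          (Real.sqrt (((n : ℝ) + 1) * t) : ℂ))
      - Complex.exp (-(π : ℂ) * Complex.I * s / 4) *
        Kbes s (4 * (π : ℂ) * Complex.exp (-(π : ℂ) * Complex.I / 4) *
          (Real.sqrt (((n : ℝ) + 1) * t) : ℂ)))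

/-- `κ(t,s)`. -/
noncomputable def kappaK (t : ℝ) (s : ℂ) : ℂ :=
  etaK t s - (1 / (2 * (π : ℂ) ^ 2 * (t : ℂ))) *
    (Complex.Gamma (1 + s) * riemannZeta (1 + s) *
        ((2 * π * Real.sqrt t : ℝ) : ℂ) ^ (-s)
      + Complex.Gamma (1 - s) * riemannZeta (1 - s) * Complex.cos ((π : ℂ) * s / 2) *
        ((2 * π * Real.sqrt t : ℝ) : ℂ) ^ s)

/-!
The lattice sum in `Φ` is a convolution in disguise: expanding `σ_{-s}` over factorisations
`n = d e` and writing `2 (d / e)^{s/2} K_s(4π z √(d e))` as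
`∫ u^{-s} e^{-2π d z u} e^{-2π e z / u} du / u`, the sum over `d` and `e` becomes the twisted
convolution of the Planck kernel `1 / (e^{2πz} - 1)` with itself. Removing the pole `1 / (2πz)`
from the kernel changes this convolution by exactly the two residue terms of `Φ`, by Mellin's
formula for `Γ ζ`. Hence `Φ(t, s)` is the value at `log √t` of a function `S` that is holomorphic
and `O(e^{-Re ξ})` in a strip containing `|Im ξ| ≤ π / 4`, and `κ` is the jump
`i (e^{πis/4} S(log √t + πi/4) - e^{-πis/4} S(log √t - πi/4))`. The theorem is then the Poisson
formula `∫ (h(a + πi/2) + h(a - πi/2)) / cosh a da = 2π h(0)` for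
`h(ξ) = e^{(1 + s/2) ξ} S(log √x + ξ / 2)`, after the substitution `t = x e^a`.
-/

open Filter Topology

lemma differentiableAt_integral_of_dominated {α E : Type*} [MeasurableSpace α] {μ : Measure α}
    [NormedAddCommGroup E] [NormedSpace ℂ E] {F : ℂ → α → E} {z₀ : ℂ} {r : ℝ} {bound : α → ℝ}
    (hr : 0 < r) (hmeas : ∀ z ∈ Metric.ball z₀ r, AEStronglyMeasurable (F z) μ)
    (hdiff : ∀ a, DifferentiableOn ℂ (fun z => F z a) (Metric.ball z₀ r))
    (hbound : ∀ z ∈ Metric.ball z₀ r, ∀ a, ‖F z a‖ ≤ bound a) (hint : Integrable bound μ) :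
    DifferentiableAt ℂ (fun z => ∫ a, F z a ∂μ) z₀ := by
  have hz₀ : z₀ ∈ Metric.ball z₀ r := Metric.mem_ball_self hr
  have hderiv : ∀ z ∈ Metric.ball z₀ r, ∀ a,
      HasDerivAt (fun z => F z a) (deriv (fun z => F z a) z) z := fun z hz a =>
    ((hdiff a).differentiableAt (Metric.isOpen_ball.mem_nhds hz)).hasDerivAt
  have hderiv_le : ∀ z ∈ Metric.ball z₀ (r / 2), ∀ a,
      ‖deriv (fun z => F z a) z‖ ≤ bound a / (r / 3) := by
    intro z hz a
    have hsub : Metric.closedBall z (r / 3) ⊆ Metric.ball z₀ r :=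
      Metric.closedBall_subset_ball' (by linarith [Metric.mem_ball.1 hz])
    exact norm_deriv_le_of_forall_mem_sphere_norm_le (by positivity)
      ((hdiff a).diffContOnCl_ball hsub) fun w hw =>
        hbound w (hsub (Metric.sphere_subset_closedBall hw)) a
  have hderiv_meas : AEStronglyMeasurable (fun a => deriv (fun z => F z a) z₀) μ := by
    set t : ℕ → ℂ := fun n => ((r / (n + 2) : ℝ) : ℂ) with ht
    have ht_norm : ∀ n, ‖t n‖ = r / (n + 2) := fun n => by
      rw [ht, Complex.norm_real, Real.norm_of_nonneg (by positivity)]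
    have ht_lim : Tendsto t atTop (𝓝[≠] 0) := by
      refine tendsto_nhdsWithin_iff.2 ⟨?_, .of_forall fun n => norm_pos_iff.1 ?_⟩
      · rw [tendsto_zero_iff_norm_tendsto_zero]
        simp only [ht_norm]
        exact tendsto_const_nhds.div_atTop
          (tendsto_atTop_add_const_right _ _ tendsto_natCast_atTop_atTop)
      · rw [ht_norm]; positivity
    refine aestronglyMeasurable_of_tendsto_ae atTop
      (f := fun n a => (t n)⁻¹ • (F (z₀ + t n) a - F z₀ a)) (fun n => ?_)
      (.of_forall fun a => (hderiv z₀ hz₀ a).tendsto_slope_zero.comp ht_lim)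
    refine ((hmeas _ ?_).sub (hmeas _ hz₀)).const_smul _
    rw [Metric.mem_ball, dist_self_add_left, ht_norm, div_lt_iff₀ (by positivity)]
    nlinarith [(Nat.cast_nonneg n : (0 : ℝ) ≤ n)]
  exact (hasDerivAt_integral_of_dominated_loc_of_deriv_le
    (Metric.ball_mem_nhds z₀ (half_pos hr))
    (eventually_of_mem (Metric.ball_mem_nhds z₀ hr) hmeas)
    (hint.mono' (hmeas z₀ hz₀) (.of_forall (hbound z₀ hz₀))) hderiv_meas
    (.of_forall fun a z hz => hderiv_le z hz a) (hint.div_const _)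
    (.of_forall fun a z hz => hderiv z
      (Metric.ball_subset_ball (by linarith) hz) a)).2.differentiableAt

lemma integral_Ioi_eq_integral_exp (f : ℝ → ℂ) :
    ∫ t in Set.Ioi (0 : ℝ), f t = ∫ b : ℝ, (Real.exp b : ℂ) * f (Real.exp b) := by
  rw [← Real.range_exp, ← Set.image_univ, integral_image_eq_integral_abs_deriv_smul
    MeasurableSet.univ (fun b _ => (Real.hasDerivAt_exp b).hasDerivWithinAt)
    Real.exp_injective.injOn]
  simp only [Real.abs_exp, Measure.restrict_univ, real_smul]

lemma integrable_exp_iff_integrableOn_Ioi (f : ℝ → ℂ) :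
    Integrable (fun b : ℝ => (Real.exp b : ℂ) * f (Real.exp b)) ↔
      IntegrableOn f (Set.Ioi 0) := by
  rw [← Real.range_exp, ← Set.image_univ, integrableOn_image_iff_integrableOn_abs_deriv_smul
    MeasurableSet.univ (fun b _ => (Real.hasDerivAt_exp b).hasDerivWithinAt)
    Real.exp_injective.injOn]
  simp only [Real.abs_exp, integrableOn_univ, real_smul]

lemma ofReal_exp_cpow (b : ℝ) (s : ℂ) : ((Real.exp b : ℝ) : ℂ) ^ s = Complex.exp (s * b) := by
  rw [cpow_def_of_ne_zero (by simp), ← ofReal_log (Real.exp_pos b).le, Real.log_exp, mul_comm]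

lemma exp_mul_cpow_sub_one_smul (f : ℝ → ℂ) (s : ℂ) (b : ℝ) :
    (Real.exp b : ℂ) * (((Real.exp b : ℝ) : ℂ) ^ (s - 1) • f (Real.exp b)) =
      exp (s * b) * f (Real.exp b) := by
  rw [ofReal_exp_cpow, smul_eq_mul, ← mul_assoc, ofReal_exp, ← Complex.exp_add]
  ring_nf

lemma mellin_eq_integral_exp (f : ℝ → ℂ) (s : ℂ) :
    mellin f s = ∫ b : ℝ, exp (s * b) * f (Real.exp b) := by
  simp only [mellin, integral_Ioi_eq_integral_exp, exp_mul_cpow_sub_one_smul]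

lemma mellinConvergent_iff_integrable_exp (f : ℝ → ℂ) (s : ℂ) :
    MellinConvergent f s ↔ Integrable fun b : ℝ => exp (s * b) * f (Real.exp b) := by
  simp only [MellinConvergent, ← integrable_exp_iff_integrableOn_Ioi, exp_mul_cpow_sub_one_smul]

lemma integrable_exp_neg_mul_abs {c : ℝ} (hc : 0 < c) :
    Integrable fun b : ℝ => Real.exp (-c * |b|) := by
  rw [← integrableOn_univ, ← Set.Iic_union_Ioi (a := (0 : ℝ))]
  refine .union ?_ ?_
  · refine (integrableOn_exp_mul_Iic hc 0).congr_fun (fun b hb => ?_) measurableSet_Iic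
    simp only [abs_of_nonpos (Set.mem_Iic.1 hb), neg_mul_neg]
  · refine (integrableOn_exp_mul_Ioi (neg_lt_zero.2 hc) 0).congr_fun (fun b hb => ?_)
      measurableSet_Ioi
    simp only [abs_of_pos (Set.mem_Ioi.1 hb)]

lemma norm_vertical_integral_le {f : ℂ → ℂ} {α β r M : ℝ}
    (hM : ∀ y ∈ Set.uIcc α β, ‖f (r + y * I)‖ ≤ M) :
    ‖I • ∫ y in α..β, f (r + y * I)‖ ≤ M * |β - α| := by
  rw [norm_smul, norm_I, one_mul]
  exact intervalIntegral.norm_integral_le_of_norm_le_const fun y hy =>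
    hM y (Set.uIoc_subset_uIcc hy)

lemma integral_horizontal_eq_of_decay {f : ℂ → ℂ} {α β R : ℝ} {B : ℝ → ℝ}
    (hd : DifferentiableOn ℂ f {ξ | ξ.im ∈ Set.uIcc α β}) (hB : Tendsto B atTop (𝓝 0))
    (hb : ∀ ξ : ℂ, ξ.im ∈ Set.uIcc α β → R ≤ |ξ.re| → ‖f ξ‖ ≤ B |ξ.re|)
    (hα : Integrable fun x : ℝ => f (x + α * I)) (hβ : Integrable fun x : ℝ => f (x + β * I)) :
    ∫ x : ℝ, f (x + α * I) = ∫ x : ℝ, f (x + β * I) := by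
  have hlim := (intervalIntegral_tendsto_integral hα tendsto_neg_atTop_atBot tendsto_id).sub
    (intervalIntegral_tendsto_integral hβ tendsto_neg_atTop_atBot tendsto_id)
  refine sub_eq_zero.1 (tendsto_nhds_unique hlim ?_)
  have hbound_lim : Tendsto (fun T => B T * |β - α| + B T * |β - α|) atTop (𝓝 0) := by
    simpa only [zero_mul, add_zero] using
      (hB.mul_const |β - α|).add (hB.mul_const |β - α|)
  refine squeeze_zero_norm' ?_ hbound_lim
  filter_upwards [eventually_ge_atTop R, eventually_ge_atTop 0] with T hT hT0
  have hside : ∀ r : ℝ, |r| = T → ‖I • ∫ y in α..β, f (r + y * I)‖ ≤ B T * |β - α| := by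
    rintro r rfl
    refine norm_vertical_integral_le fun y hy => ?_
    simpa using hb (r + y * I) (by simpa using hy) (by simpa using hT)
  have hrect := integral_boundary_rect_eq_zero_of_differentiableOn f
    ((-T : ℝ) + α * I) (T + β * I) (hd.mono fun ξ hξ => by simpa using hξ.2)
  simp only [add_re, add_im, mul_re, mul_im, ofReal_re, ofReal_im, I_re, I_im, mul_zero, mul_one,
    sub_zero, add_zero, zero_add] at hrect
  rw [show ∀ a b : ℂ, a - b = I • (∫ y in α..β, f ((-T : ℝ) + y * I)) -
    I • (∫ y in α..β, f (T + y * I)) + (a - b + I • (∫ y in α..β, f (T + y * I)) -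
      I • (∫ y in α..β, f ((-T : ℝ) + y * I))) from fun a b => by ring, id, hrect, add_zero]
  exact (norm_sub_le _ _).trans (add_le_add (hside _ (by rw [abs_neg, abs_of_nonneg hT0]))
    (hside _ (abs_of_nonneg hT0)))

lemma integral_inv_cosh : ∫ a : ℝ, (Real.cosh a)⁻¹ = π := by
  have h := integral_image_eq_integral_abs_deriv_smul (s := Set.univ) MeasurableSet.univ
    (fun a _ => (Real.hasDerivAt_sinh a).hasDerivWithinAt) Real.sinh_injective.injOn
    (fun y => (1 + y ^ 2)⁻¹)
  rw [Set.image_univ, Real.sinh_surjective.range_eq, setIntegral_univ, setIntegral_univ,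
    integral_univ_inv_one_add_sq] at h
  rw [h]
  congr 1 with a
  have := Real.cosh_pos a
  rw [← Real.cosh_sq', abs_of_pos this, smul_eq_mul]
  field_simp

lemma exp_abs_le_two_mul_cosh (a : ℝ) : Real.exp |a| ≤ 2 * Real.cosh a := by
  rw [← Real.cosh_abs, Real.cosh_eq]
  linarith [Real.exp_pos (-|a|)]

lemma sinh_abs_re_le_norm_sinh (ξ : ℂ) : Real.sinh |ξ.re| ≤ ‖sinh ξ‖ := by
  have h := abs_norm_sub_norm_le (exp ξ) (exp (-ξ))
  rw [Complex.norm_exp, Complex.norm_exp, neg_re, ← mul_div_cancel_left₀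
    (Real.exp ξ.re - Real.exp (-ξ.re)) (two_ne_zero' ℝ), mul_div_assoc, ← Real.sinh_eq,
    abs_mul, Real.abs_sinh] at h
  rw [Complex.sinh, norm_div, Complex.norm_ofNat, le_div_iff₀ two_pos]
  simpa [mul_comm] using h

lemma sinh_ne_zero_of_abs_im_le {ξ : ℂ} (hξ : ξ ≠ 0) (him : |ξ.im| ≤ π / 2) : sinh ξ ≠ 0 := by
  intro h
  have hre : ξ.re = 0 := by
    have := sinh_abs_re_le_norm_sinh ξ
    rw [h, norm_zero, Real.sinh_nonpos_iff] at this
    exact abs_nonpos_iff.1 this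
  have hξI : ξ = ξ.im * I := by rw [← re_add_im ξ, hre]; simp
  rw [hξI, sinh_mul_I, mul_eq_zero, or_iff_left I_ne_zero, ← ofReal_sin, ofReal_eq_zero] at h
  have : ξ.im = 0 := by
    have hπ := Real.pi_pos
    have := abs_le.1 him
    exact (Real.sin_eq_zero_iff_of_lt_of_lt (by linarith) (by linarith)).1 h
  exact hξ (by rw [hξI, this]; simp)

lemma integrable_div_cosh {f : ℝ → ℂ} {C c : ℝ} (hf : Continuous f) (hc : c < 1)
    (hb : ∀ a, ‖f a‖ ≤ C * Real.exp (c * |a|)) : Integrable fun a => f a / Real.cosh a := by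
  refine ((integrable_exp_neg_mul_abs (sub_pos.2 hc)).const_mul (C * 2)).mono'
    (hf.div (by fun_prop) fun a => by exact_mod_cast (Real.cosh_pos a).ne').aestronglyMeasurable
    (.of_forall fun a => ?_)
  have hcosh := Real.cosh_pos a
  have hC : 0 ≤ C := nonneg_of_mul_nonneg_left ((norm_nonneg _).trans (hb a)) (Real.exp_pos _)
  rw [norm_div, norm_real, Real.norm_of_nonneg hcosh.le, div_le_iff₀ hcosh]
  calc ‖f a‖ ≤ C * (Real.exp (-(1 - c) * |a|) * Real.exp |a|) := by
        rw [← Real.exp_add]; convert hb a using 3; ring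
    _ ≤ C * (Real.exp (-(1 - c) * |a|) * (2 * Real.cosh a)) := by
        gcongr; exact exp_abs_le_two_mul_cosh a
    _ = C * 2 * Real.exp (-(1 - c) * |a|) * Real.cosh a := by ring

lemma differentiableOn_dslope_div_dslope_sinh {h : ℂ → ℂ}
    (hd : DifferentiableOn ℂ h {ξ | |ξ.im| ≤ π / 2}) :
    DifferentiableOn ℂ (fun ξ => dslope h 0 ξ / dslope sinh 0 ξ) {ξ | |ξ.im| ≤ π / 2} := by
  have hnhds : {ξ : ℂ | |ξ.im| ≤ π / 2} ∈ 𝓝 0 :=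
    (continuous_im.abs.tendsto' 0 0 (by simp)).eventually_le_const (by positivity)
  refine ((differentiableOn_dslope hnhds).2 hd).div
    ((differentiableOn_dslope hnhds).2 differentiable_sinh.differentiableOn) fun ξ hξ => ?_
  rcases eq_or_ne ξ 0 with rfl | hne
  · simp [dslope_same]
  · rw [dslope_of_ne _ hne, slope_def_field, sinh_zero, sub_zero, sub_zero]
    exact div_ne_zero (sinh_ne_zero_of_abs_im_le hne hξ) hne

lemma dslope_div_dslope_sinh (h : ℂ → ℂ) {ξ : ℂ} (hξ : ξ ≠ 0) :
    dslope h 0 ξ / dslope sinh 0 ξ = (h ξ - h 0) / sinh ξ := by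
  rw [dslope_of_ne _ hξ, dslope_of_ne _ hξ, slope_def_field, slope_def_field, sinh_zero, sub_zero,
    sub_zero, div_div_div_cancel_right₀ hξ]

lemma exp_le_four_mul_sinh {r : ℝ} (hr : 1 ≤ r) : Real.exp r ≤ 4 * Real.sinh r := by
  have h1 := Real.add_one_le_exp r
  have h2 : Real.exp (-r) * Real.exp r = 1 := by rw [← Real.exp_add]; simp
  rw [Real.sinh_eq]
  nlinarith [Real.exp_pos (-r)]

lemma norm_sub_div_sinh_le {z w ξ : ℂ} {C c : ℝ} (hz : ‖z‖ ≤ C * Real.exp (c * |ξ.re|))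
    (hw : ‖w‖ ≤ C * Real.exp (c * |ξ.re|)) (hξ : 1 ≤ |ξ.re|) :
    ‖(z - w) / sinh ξ‖ ≤ 8 * C * Real.exp (-(1 - c) * |ξ.re|) := by
  have hsinh : Real.exp |ξ.re| / 4 ≤ ‖sinh ξ‖ := by
    linarith [exp_le_four_mul_sinh hξ, sinh_abs_re_le_norm_sinh ξ]
  have hpos := Real.exp_pos |ξ.re|
  rw [norm_div, div_le_iff₀ (by linarith)]
  have hC : 0 ≤ C := nonneg_of_mul_nonneg_left ((norm_nonneg _).trans hz) (Real.exp_pos _)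
  calc ‖z - w‖ ≤ C * Real.exp (c * |ξ.re|) + C * Real.exp (c * |ξ.re|) :=
        (norm_sub_le z w).trans (add_le_add hz hw)
    _ = 8 * C * Real.exp (-(1 - c) * |ξ.re|) * (Real.exp |ξ.re| / 4) := by
        rw [show c * |ξ.re| = -(1 - c) * |ξ.re| + |ξ.re| by ring, Real.exp_add]; ring
    _ ≤ 8 * C * Real.exp (-(1 - c) * |ξ.re|) * ‖sinh ξ‖ := by gcongr

lemma dslope_div_dslope_sinh_horizontal (h : ℂ → ℂ) {θ : ℝ} (hcos : Real.cos θ = 0) (a : ℝ) :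
    dslope h 0 (a + θ * I) / dslope sinh 0 (a + θ * I) =
      -(Real.sin θ * I) * (h (a + θ * I) / Real.cosh a - h 0 / Real.cosh a) := by
  have hsin : (Real.sin θ : ℂ) ^ 2 = 1 := by
    have := Real.sin_sq_add_cos_sq θ
    rw [hcos] at this
    exact_mod_cast (by simpa using this : Real.sin θ ^ 2 = 1)
  have hcosh : (Real.cosh a : ℂ) ≠ 0 := by exact_mod_cast (Real.cosh_pos a).ne'
  have hsinh : sinh (a + θ * I) = Real.sin θ * I * Real.cosh a := by
    rw [sinh_add, cosh_mul_I, sinh_mul_I, ← ofReal_cos, hcos, ofReal_cosh, ofReal_sin]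
    push_cast
    ring
  have hunit : (Real.sin θ * I) * -(Real.sin θ * I) = 1 := by
    linear_combination hsin - (Real.sin θ : ℂ) ^ 2 * I_sq
  have hne : (a + θ * I : ℂ) ≠ 0 := by
    intro h0
    rw [h0, sinh_zero] at hsinh
    exact mul_ne_zero (left_ne_zero_of_mul_eq_one hunit) hcosh hsinh.symm
  rw [dslope_div_dslope_sinh h hne, hsinh, ← div_div, div_eq_mul_inv _ (_ * I),
    inv_eq_of_mul_eq_one_right hunit]
  ring

lemma integral_const_div_cosh (z : ℂ) : ∫ a : ℝ, z / Real.cosh a = z * π := by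
  simp only [div_eq_mul_inv, ← ofReal_inv, integral_const_mul, integral_complex_ofReal,
    integral_inv_cosh]

lemma norm_dslope_div_dslope_sinh_le {h : ℂ → ℂ} {C c : ℝ} (hc0 : 0 ≤ c) (h0 : ‖h 0‖ ≤ C) {ξ : ℂ}
    (hb : ‖h ξ‖ ≤ C * Real.exp (c * |ξ.re|)) (hre : 1 ≤ |ξ.re|) :
    ‖dslope h 0 ξ / dslope sinh 0 ξ‖ ≤ 8 * C * Real.exp (-(1 - c) * |ξ.re|) := by
  rw [dslope_div_dslope_sinh h (by rintro rfl; norm_num at hre)]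
  refine norm_sub_div_sinh_le hb (h0.trans (le_mul_of_one_le_right ?_ ?_)) hre
  · exact (norm_nonneg _).trans h0
  · exact Real.one_le_exp (by positivity)

/-- The Poisson formula at the centre of a strip of width `π`. -/
lemma integral_strip_div_cosh {h : ℂ → ℂ} {C c : ℝ} (hc0 : 0 ≤ c) (hc1 : c < 1)
    (hd : DifferentiableOn ℂ h {ξ | |ξ.im| ≤ π / 2})
    (hb : ∀ ξ : ℂ, |ξ.im| ≤ π / 2 → ‖h ξ‖ ≤ C * Real.exp (c * |ξ.re|)) :
    ∫ a : ℝ, (h (a + (π / 2 : ℝ) * I) + h (a + (-(π / 2) : ℝ) * I)) / Real.cosh a =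
      2 * π * h 0 := by
  have hπ : 0 ≤ π / 2 := by positivity
  have him : ∀ ξ : ℂ, ξ.im ∈ Set.uIcc (-(π / 2)) (π / 2) → |ξ.im| ≤ π / 2 := fun ξ hξ => by
    rwa [Set.uIcc_of_le (by linarith), Set.mem_Icc, ← abs_le] at hξ
  have hint : ∀ θ : ℝ, |θ| ≤ π / 2 → Integrable fun a : ℝ => h (a + θ * I) / Real.cosh a :=
    fun θ hθ => integrable_div_cosh (C := C)
      (hd.continuousOn.comp_continuous (by fun_prop) fun a => by simpa using hθ) hc1
      fun a => by simpa using hb (a + θ * I) (by simpa using hθ)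
  have hint0 : Integrable fun a : ℝ => h 0 / Real.cosh a :=
    integrable_div_cosh (C := ‖h 0‖) continuous_const zero_lt_one fun a => by simp
  have hplus := hint (π / 2) (abs_of_nonneg hπ).le
  have hminus := hint (-(π / 2)) (by rw [abs_neg, abs_of_nonneg hπ])
  have hq_plus := dslope_div_dslope_sinh_horizontal h Real.cos_pi_div_two
  have hq_minus := dslope_div_dslope_sinh_horizontal h
    ((Real.cos_neg _).trans Real.cos_pi_div_two)
  have hdecay_lim : Tendsto (fun r => 8 * C * Real.exp (-(1 - c) * r)) atTop (𝓝 0) := by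
    rw [← mul_zero (8 * C)]
    exact (Real.tendsto_exp_atBot.comp
      (tendsto_id.const_mul_atTop_of_neg (by linarith))).const_mul _
  have hshift := integral_horizontal_eq_of_decay
    ((differentiableOn_dslope_div_dslope_sinh hd).mono him) hdecay_lim
    (fun ξ hξ => norm_dslope_div_dslope_sinh_le hc0 (by simpa using hb 0 (by simpa using hπ))
      (hb ξ (him ξ hξ)))
    (((hminus.sub hint0).const_mul _).congr (.of_forall fun a => (hq_minus a).symm))
    (((hplus.sub hint0).const_mul _).congr (.of_forall fun a => (hq_plus a).symm))
  simp only [hq_plus, hq_minus, integral_const_mul, integral_sub hplus hint0,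
    integral_sub hminus hint0, integral_const_div_cosh, Real.sin_neg, Real.sin_pi_div_two,
    ofReal_neg (1 : ℝ), ofReal_one] at hshift
  simp only [add_div, integral_add hplus hminus]
  linear_combination -I * hshift +
    ((∫ a : ℝ, h (a + (π / 2 : ℝ) * I) / Real.cosh a) +
      (∫ a : ℝ, h (a + (-(π / 2) : ℝ) * I) / Real.cosh a) - 2 * π * h 0) * I_sq

/-- The Planck kernel `(e^{2πu} - 1)⁻¹`, whose Lambert series carries the divisor sums. -/
noncomputable def planck (u : ℂ) : ℂ := (exp (2 * π * u) - 1)⁻¹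

/-- The Planck kernel with its pole at the origin removed; the value at `0` itself is junk. -/
noncomputable def regPlanck (u : ℂ) : ℂ := planck u - (2 * π * u)⁻¹

lemma norm_two_pi_mul (u : ℂ) : ‖(2 * π * u : ℂ)‖ = 2 * π * ‖u‖ := by
  simp [abs_of_pos Real.pi_pos]

lemma exp_sub_one_le_norm (w : ℂ) : Real.exp w.re - 1 ≤ ‖exp w - 1‖ := by
  simpa [Complex.norm_exp] using norm_sub_norm_le (exp w) 1

lemma exp_sub_one_ne_zero {w : ℂ} (hw : 0 < w.re) : exp w - 1 ≠ 0 :=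
  norm_pos_iff.1 ((sub_pos.2 (Real.one_lt_exp_iff.2 hw)).trans_le (exp_sub_one_le_norm w))

lemma pow_div_factorial_le_exp_sub_one {x : ℝ} (hx : 0 ≤ x) {k : ℕ} (hk : k ≠ 0) :
    x ^ k / k.factorial ≤ Real.exp x - 1 := by
  have hsum := Real.sum_le_exp_of_nonneg hx (k + 1)
  rw [sum_range_succ] at hsum
  have hone : 1 ≤ ∑ i ∈ range k, x ^ i / i.factorial := by
    simpa using single_le_sum (f := fun i : ℕ => x ^ i / i.factorial)
      (fun i _ => by positivity) (mem_range.2 hk.bot_lt)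
  linarith

lemma two_pi_mul_re_pos {u : ℂ} (hu : 0 < u.re) : 0 < (2 * π * u).re := by
  simpa [mul_assoc] using mul_pos two_pos (mul_pos Real.pi_pos hu)

lemma norm_planck_le {u : ℂ} (hu : 0 < u.re) {k : ℕ} (hk : k ≠ 0) :
    ‖planck u‖ ≤ k.factorial / (2 * π * u.re) ^ k := by
  have h := (pow_div_factorial_le_exp_sub_one (two_pi_mul_re_pos hu).le hk).trans
    (exp_sub_one_le_norm _)
  rw [show (2 * π * u).re = 2 * π * u.re by simp [mul_assoc]] at h
  rw [planck, norm_inv, ← inv_div]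
  exact inv_anti₀ (by positivity) h

lemma differentiableAt_planck {u : ℂ} (hu : 0 < u.re) : DifferentiableAt ℂ planck u :=
  .inv (by fun_prop) (exp_sub_one_ne_zero (two_pi_mul_re_pos hu))

lemma differentiableAt_regPlanck {u : ℂ} (hu : 0 < u.re) : DifferentiableAt ℂ regPlanck u :=
  (differentiableAt_planck hu).sub (.inv (by fun_prop) (ne_zero_of_re_pos (two_pi_mul_re_pos hu)))

lemma norm_inv_exp_sub_one_sub_inv_le {w : ℂ} (hw : w ≠ 0) (hw' : ‖w‖ ≤ 1 / 2) :
    ‖(exp w - 1)⁻¹ - w⁻¹‖ ≤ 2 := by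
  have hpos : 0 < ‖w‖ := norm_pos_iff.2 hw
  have hquad : ‖exp w - 1 - w‖ ≤ ‖w‖ ^ 2 := norm_exp_sub_one_sub_id_le (by linarith)
  have hlin : ‖w‖ / 2 ≤ ‖exp w - 1‖ := by
    have := norm_sub_norm_le w (w - (exp w - 1))
    rw [sub_sub_cancel, norm_sub_rev] at this
    nlinarith
  have hne : exp w - 1 ≠ 0 := norm_pos_iff.1 (by linarith)
  rw [inv_sub_inv hne hw, norm_div, norm_sub_rev, norm_mul, div_le_iff₀ (by positivity)]
  calc ‖exp w - 1 - w‖ ≤ 2 * (‖w‖ / 2 * ‖w‖) := by linarith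
    _ ≤ 2 * (‖exp w - 1‖ * ‖w‖) := by gcongr

lemma norm_planck_le_of_sector {u : ℂ} (hu : 0 < u.re) (hsec : ‖u‖ ≤ 2 * u.re) {k : ℕ}
    (hk : k ≠ 0) : ‖planck u‖ ≤ k.factorial / (π * ‖u‖) ^ k := by
  have hnorm : 0 < ‖u‖ := norm_pos_iff.2 (ne_zero_of_re_pos hu)
  refine (norm_planck_le hu hk).trans ?_
  have : π * ‖u‖ ≤ 2 * π * u.re := by nlinarith [Real.pi_pos]
  gcongr

lemma norm_regPlanck_le_div {u : ℂ} (hu : 0 < u.re) (hsec : ‖u‖ ≤ 2 * u.re) :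
    ‖regPlanck u‖ ≤ 1 / ‖u‖ := by
  have hnorm : 0 < ‖u‖ := norm_pos_iff.2 (ne_zero_of_re_pos hu)
  have hpi := Real.pi_gt_three
  calc ‖regPlanck u‖ ≤ ‖planck u‖ + ‖(2 * π * u : ℂ)⁻¹‖ := norm_sub_le _ _
    _ ≤ 1 / (π * ‖u‖) + 1 / (2 * π * ‖u‖) := by
        gcongr
        · simpa using norm_planck_le_of_sector hu hsec one_ne_zero
        · rw [norm_inv, norm_two_pi_mul, one_div]
    _ = 3 / (2 * π) * (1 / ‖u‖) := by field_simp; norm_num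
    _ ≤ 1 * (1 / ‖u‖) := by
        gcongr
        rw [div_le_one (by positivity)]
        linarith
    _ = 1 / ‖u‖ := one_mul _

lemma norm_regPlanck_le_const {u : ℂ} (hu : 0 < u.re) (hsec : ‖u‖ ≤ 2 * u.re) :
    ‖regPlanck u‖ ≤ 16 := by
  have hnorm : 0 < ‖u‖ := norm_pos_iff.2 (ne_zero_of_re_pos hu)
  rcases le_total ‖(2 * π * u : ℂ)‖ (1 / 2) with hsmall | hlarge
  · have := norm_inv_exp_sub_one_sub_inv_le (ne_zero_of_re_pos (two_pi_mul_re_pos hu)) hsmall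
    exact this.trans (by norm_num)
  · refine (norm_regPlanck_le_div hu hsec).trans ((div_le_iff₀ hnorm).2 ?_)
    rw [norm_two_pi_mul] at hlarge
    nlinarith [Real.pi_lt_four]

lemma exp_mem_sector {ζ : ℂ} (hζ : |ζ.im| ≤ 1) :
    0 < (exp ζ).re ∧ ‖exp ζ‖ ≤ 2 * (exp ζ).re := by
  have hcos : 1 / 2 ≤ Real.cos ζ.im := by
    rw [← Real.cos_abs, ← Real.cos_pi_div_three]
    exact Real.cos_le_cos_of_nonneg_of_le_pi (abs_nonneg _) (by linarith [Real.pi_pos])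
      (by linarith [Real.pi_gt_three])
  have hpos := Real.exp_pos ζ.re
  rw [exp_re, Complex.norm_exp]
  constructor <;> nlinarith

/-- Holomorphy on a neighbourhood of the strip `|Im ζ| ≤ 1` together with the bound
`‖F ζ‖ ≤ C e^{-k Re ζ} min(1, e^{-Re ζ})`. In terms of `u = e^ζ` this is `O(|u|^{-k})` at the
origin and `O(|u|^{-k-1})` at infinity, in a sector about the positive axis. -/
structure StripDecay (F : ℂ → ℂ) (k : ℕ) (C : ℝ) : Prop where
  differentiableAt : ∀ ⦃ζ : ℂ⦄, |ζ.im| ≤ 1 → DifferentiableAt ℂ F ζ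
  norm_le : ∀ ⦃ζ : ℂ⦄, |ζ.im| ≤ 1 → ‖F ζ‖ ≤ C * Real.exp (-(k * ζ.re) - max ζ.re 0)

lemma StripDecay.comp_exp {G : ℂ → ℂ} {k : ℕ} {C : ℝ}
    (hd : ∀ u : ℂ, 0 < u.re → DifferentiableAt ℂ G u)
    (h0 : ∀ u : ℂ, 0 < u.re → ‖u‖ ≤ 2 * u.re → ‖G u‖ ≤ C / ‖u‖ ^ k)
    (h1 : ∀ u : ℂ, 0 < u.re → ‖u‖ ≤ 2 * u.re → ‖G u‖ ≤ C / ‖u‖ ^ (k + 1)) :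
    StripDecay (fun ζ => G (exp ζ)) k C where
  differentiableAt ζ hζ :=
    (hd _ (exp_mem_sector hζ).1).comp ζ differentiable_exp.differentiableAt
  norm_le ζ hζ := by
    obtain ⟨hre, hsec⟩ := exp_mem_sector hζ
    rcases le_total ζ.re 0 with h | h
    · convert h0 _ hre hsec using 1
      rw [max_eq_right h, sub_zero, Complex.norm_exp, ← Real.exp_nat_mul, Real.exp_neg,
        div_eq_mul_inv]
    · convert h1 _ hre hsec using 1
      rw [max_eq_left h, Complex.norm_exp, ← Real.exp_nat_mul, div_eq_mul_inv, ← Real.exp_neg]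
      push_cast
      ring_nf

lemma stripDecay_regPlanck : StripDecay (fun ζ => regPlanck (exp ζ)) 0 16 := by
  refine .comp_exp (fun u => differentiableAt_regPlanck) (fun u hu hsec => ?_)
    fun u hu hsec => ?_
  · simpa using norm_regPlanck_le_const hu hsec
  · rw [zero_add, pow_one]
    exact (norm_regPlanck_le_div hu hsec).trans (by gcongr; norm_num)

lemma stripDecay_planck : StripDecay (fun ζ => planck (exp ζ)) 1 1 := by
  have hpi := Real.pi_gt_three
  refine .comp_exp (fun u => differentiableAt_planck) (fun u hu hsec => ?_)
    fun u hu hsec => ?_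
  all_goals
    have hnorm : 0 < ‖u‖ := norm_pos_iff.2 (ne_zero_of_re_pos hu)
  · refine (norm_planck_le_of_sector hu hsec one_ne_zero).trans ?_
    rw [div_le_div_iff₀ (by positivity) (by positivity)]
    norm_num
    nlinarith
  · refine (norm_planck_le_of_sector hu hsec two_ne_zero).trans ?_
    rw [div_le_div_iff₀ (by positivity) (by positivity), mul_pow]
    have : 2 ≤ π ^ 2 := by nlinarith
    norm_num
    gcongr

lemma exp_neg_le_factorial_div_pow {x : ℝ} (hx : 0 < x) (k : ℕ) :
    Real.exp (-x) ≤ k.factorial / x ^ k := by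
  rw [Real.exp_neg, ← inv_div]
  exact inv_anti₀ (by positivity) (Real.pow_div_factorial_le_exp _ hx.le k)

lemma stripDecay_exp_neg {m : ℝ} (hm : 1 ≤ m) :
    StripDecay (fun ζ => exp (-(2 * π * m * exp ζ))) 2 (1 / m ^ 2) := by
  have hpi := Real.pi_gt_three
  have hm0 : 0 < m := by linarith
  have hbound : ∀ (k : ℕ), 2 ≤ k → k.factorial ≤ (3 : ℝ) ^ k → ∀ u : ℂ, 0 < u.re →
      ‖u‖ ≤ 2 * u.re → ‖exp (-(2 * π * m * u))‖ ≤ 1 / m ^ 2 / ‖u‖ ^ k := by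
    intro k hk hfac u hu hsec
    have hnorm : 0 < ‖u‖ := norm_pos_iff.2 (ne_zero_of_re_pos hu)
    have hle : m * (3 * ‖u‖) ≤ 2 * π * m * u.re :=
      calc m * (3 * ‖u‖) ≤ m * (π * (2 * u.re)) := by gcongr
        _ = 2 * π * m * u.re := by ring
    rw [Complex.norm_exp, show (-(2 * π * m * u)).re = -(2 * π * m * u.re) by simp [mul_assoc]]
    calc Real.exp (-(2 * π * m * u.re)) ≤ Real.exp (-(m * (3 * ‖u‖))) := by gcongr
      _ ≤ k.factorial / (m * (3 * ‖u‖)) ^ k := exp_neg_le_factorial_div_pow (by positivity) k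
      _ ≤ 3 ^ k / (m * (3 * ‖u‖)) ^ k := by gcongr
      _ = 1 / m ^ k / ‖u‖ ^ k := by simp only [mul_pow]; field_simp
      _ ≤ 1 / m ^ 2 / ‖u‖ ^ k := by gcongr
  exact .comp_exp (G := fun u => exp (-(2 * π * m * u))) (fun u _ => by fun_prop)
    (hbound 2 le_rfl (by norm_num [Nat.factorial]))
    (hbound 3 (by norm_num) (by norm_num [Nat.factorial]))

/-- The convolution `∫ u^{-s} F(zu) G(z/u) du/u` in the logarithmic variables `ζ = log z`,
`b = log u`, where `F` and `G` are given as functions of the logarithm. -/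
noncomputable def twistedConv (F G : ℂ → ℂ) (s ζ : ℂ) : ℂ :=
  ∫ b : ℝ, exp (-s * b) * (F (ζ + b) * G (ζ - b))

lemma abs_im_add_ofReal (ζ : ℂ) (b : ℝ) : |(ζ + b).im| = |ζ.im| := by simp

lemma abs_im_sub_ofReal (ζ : ℂ) (b : ℝ) : |(ζ - b).im| = |ζ.im| := by simp

lemma twistedConv_neg (F G : ℂ → ℂ) (s ζ : ℂ) :
    twistedConv F G (-s) ζ = twistedConv G F s ζ := by
  rw [twistedConv, ← integral_neg_eq_self]
  refine integral_congr_ae (.of_forall fun b => ?_)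
  push_cast
  ring_nf

namespace StripDecay

variable {F G : ℂ → ℂ} {k : ℕ} {C D : ℝ}

lemma nonneg (hF : StripDecay F k C) : 0 ≤ C :=
  nonneg_of_mul_nonneg_left ((norm_nonneg _).trans (hF.norm_le (ζ := 0) (by simp)))
    (Real.exp_pos _)

lemma norm_integrand_le (hF : StripDecay F k C) (hG : StripDecay G k D) {s ζ : ℂ}
    (hζ : |ζ.im| ≤ 1) (b : ℝ) :
    ‖exp (-s * b) * (F (ζ + b) * G (ζ - b))‖ ≤
      C * D * Real.exp (-((2 * k + 1) * ζ.re)) * Real.exp (-(1 - |s.re|) * |b|) := by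
  have hF0 := hF.nonneg
  have hG0 := hG.nonneg
  have hmax : ζ.re + |b| ≤ max (ζ.re + b) 0 + max (ζ.re - b) 0 := by
    rcases abs_cases b with ⟨h, -⟩ | ⟨h, -⟩ <;> rw [h] <;>
      linarith [le_max_left (ζ.re + b) 0, le_max_right (ζ.re + b) 0,
        le_max_left (ζ.re - b) 0, le_max_right (ζ.re - b) 0]
  have hsb : -s.re * b ≤ |s.re| * |b| := by
    rw [← abs_mul, ← abs_neg, ← neg_mul]
    exact le_abs_self _
  rw [norm_mul, norm_mul, Complex.norm_exp]
  calc _ ≤ Real.exp (-s * b).re * (C * Real.exp (-(k * (ζ + b).re) - max (ζ + b).re 0) *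
        (D * Real.exp (-(k * (ζ - b).re) - max (ζ - b).re 0))) := by
        gcongr
        · exact hF.norm_le (by rwa [abs_im_add_ofReal])
        · exact hG.norm_le (by rwa [abs_im_sub_ofReal])
    _ = C * D * Real.exp (-s.re * b - 2 * k * ζ.re -
          (max (ζ.re + b) 0 + max (ζ.re - b) 0)) := by
        simp only [neg_mul, neg_re, mul_re, ofReal_re, ofReal_im, mul_zero, sub_zero, add_re,
          sub_re]
        rw [mul_mul_mul_comm, mul_left_comm, ← Real.exp_add, ← Real.exp_add]
        ring_nf
    _ ≤ C * D * Real.exp (-((2 * k + 1) * ζ.re) + -(1 - |s.re|) * |b|) := by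
        gcongr
        linarith
    _ = _ := by rw [Real.exp_add, ← mul_assoc]

lemma continuous_integrand (hF : StripDecay F k C) (hG : StripDecay G k D) {s ζ : ℂ}
    (hζ : |ζ.im| ≤ 1) :
    Continuous fun b : ℝ => exp (-s * b) * (F (ζ + b) * G (ζ - b)) := by
  refine .mul (by fun_prop) (.mul ?_ ?_) <;> rw [continuous_iff_continuousAt] <;> intro b
  · exact (hF.differentiableAt (by rwa [abs_im_add_ofReal])).continuousAt.comp
      (f := fun b : ℝ => ζ + b) (by fun_prop)
  · exact (hG.differentiableAt (by rwa [abs_im_sub_ofReal])).continuousAt.comp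
      (f := fun b : ℝ => ζ - b) (by fun_prop)

lemma integrable_integrand (hF : StripDecay F k C) (hG : StripDecay G k D) {s ζ : ℂ}
    (hs : |s.re| < 1) (hζ : |ζ.im| ≤ 1) :
    Integrable fun b : ℝ => exp (-s * b) * (F (ζ + b) * G (ζ - b)) :=
  ((integrable_exp_neg_mul_abs (sub_pos.2 hs)).const_mul _).mono'
    (hF.continuous_integrand hG hζ).aestronglyMeasurable
    (.of_forall (hF.norm_integrand_le hG hζ))

lemma norm_twistedConv_le (hF : StripDecay F k C) (hG : StripDecay G k D) {s ζ : ℂ}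
    (hs : |s.re| < 1) (hζ : |ζ.im| ≤ 1) :
    ‖twistedConv F G s ζ‖ ≤ C * D * Real.exp (-((2 * k + 1) * ζ.re)) *
      ∫ b : ℝ, Real.exp (-(1 - |s.re|) * |b|) := by
  rw [← integral_const_mul]
  exact norm_integral_le_of_norm_le ((integrable_exp_neg_mul_abs (sub_pos.2 hs)).const_mul _)
    (.of_forall (hF.norm_integrand_le hG hζ))

lemma differentiableAt_twistedConv (hF : StripDecay F k C) (hG : StripDecay G k D) {s ζ : ℂ}
    (hs : |s.re| < 1) (hζ : |ζ.im| < 1) :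
    DifferentiableAt ℂ (twistedConv F G s) ζ := by
  have him : ∀ z ∈ Metric.ball ζ (1 - |ζ.im|), |z.im| ≤ 1 := fun z hz => by
    have h1 := abs_im_le_norm (z - ζ)
    have h2 := abs_sub_abs_le_abs_sub z.im ζ.im
    rw [Metric.mem_ball, dist_eq_norm] at hz
    rw [sub_im] at h1
    linarith
  refine differentiableAt_integral_of_dominated (sub_pos.2 hζ)
    (fun z hz => (hF.continuous_integrand hG (him z hz)).aestronglyMeasurable)
    (fun b z hz => ?_) (fun z hz b => (hF.norm_integrand_le hG (him z hz) b).trans ?_)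
    ((integrable_exp_neg_mul_abs (sub_pos.2 hs)).const_mul
      (C * D * Real.exp (-((2 * k + 1) * (ζ.re - 1)))))
  · refine (DifferentiableAt.const_mul (.mul ?_ ?_) _).differentiableWithinAt
    · exact (hF.differentiableAt (by rw [abs_im_add_ofReal]; exact him z hz)).comp z
        (f := fun z : ℂ => z + b) (by fun_prop)
    · exact (hG.differentiableAt (by rw [abs_im_sub_ofReal]; exact him z hz)).comp z
        (f := fun z : ℂ => z - b) (by fun_prop)
  · have hre : ζ.re - 1 ≤ z.re := by
      have h1 := (abs_le.1 (abs_re_le_norm (z - ζ))).1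
      rw [Metric.mem_ball, dist_eq_norm] at hz
      rw [sub_re] at h1
      linarith [abs_nonneg ζ.im]
    have hC := hF.nonneg
    have hD := hG.nonneg
    gcongr

lemma differentiableAt_twistedConv_param (hF : StripDecay F k C) (hG : StripDecay G k D) {s ζ : ℂ}
    (hs : |s.re| < 1) (hζ : |ζ.im| ≤ 1) :
    DifferentiableAt ℂ (fun s => twistedConv F G s ζ) s := by
  refine differentiableAt_integral_of_dominated (half_pos (sub_pos.2 hs))
    (fun z _ => (hF.continuous_integrand hG hζ).aestronglyMeasurable)
    (fun b z _ => by fun_prop) (fun z hz b => (hF.norm_integrand_le hG hζ b).trans ?_)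
    ((integrable_exp_neg_mul_abs (half_pos (sub_pos.2 hs))).const_mul
      (C * D * Real.exp (-((2 * k + 1) * ζ.re))))
  have hre : (1 - |s.re|) / 2 ≤ 1 - |z.re| := by
    have h1 := abs_re_le_norm (z - s)
    have h2 := abs_sub_abs_le_abs_sub z.re s.re
    rw [Metric.mem_ball, dist_eq_norm] at hz
    rw [sub_re] at h1
    linarith
  have hC := hF.nonneg
  have hD := hG.nonneg
  gcongr

end StripDecay

/-- `(2π)^{-w} Γ(w) ζ(w)`, the Mellin transform of the Planck kernel. -/
noncomputable def planckMellin (w : ℂ) : ℂ := (2 * π : ℂ) ^ (-w) * Gamma w * riemannZeta w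

lemma hasSum_planck {u : ℂ} (hu : 0 < u.re) :
    HasSum (fun n : ℕ => exp (-(2 * π * (n + 1) * u))) (planck u) := by
  have hw := two_pi_mul_re_pos hu
  have hlt : ‖exp (-(2 * π * u))‖ < 1 := by
    rwa [Complex.norm_exp, Real.exp_lt_one_iff, neg_re, neg_lt_zero]
  have hterm : ∀ n : ℕ, exp (-(2 * π * u)) * exp (-(2 * π * u)) ^ n =
      exp (-(2 * π * (n + 1) * u)) := fun n => by
    rw [← exp_nat_mul, ← Complex.exp_add]
    ring_nf
  have hvalue : exp (-(2 * π * u)) * (1 - exp (-(2 * π * u)))⁻¹ = planck u := by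
    rw [planck, Complex.exp_neg, ← mul_inv, mul_sub, mul_one, mul_inv_cancel₀ (exp_ne_zero _)]
  simpa only [hterm, hvalue] using
    (hasSum_geometric_of_norm_lt_one hlt).mul_left (exp (-(2 * π * u)))

lemma mellin_planck {w : ℂ} (hw : 1 < w.re) :
    mellin (fun v : ℝ => planck v) w = planckMellin w := by
  have h := hasSum_mellin (ι := ℕ) (a := fun _ => 1) (p := fun n => 2 * π * (n + 1))
    (F := fun v : ℝ => planck v) (s := w) (fun n => .inr (by positivity)) (by linarith)
    (fun t ht => ?_) ?_
  · rw [← h.tsum_eq, planckMellin, zeta_eq_tsum_one_div_nat_add_one_cpow hw, ← tsum_mul_left]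
    refine tsum_congr fun n => ?_
    have hcpow : ((2 * π * (n + 1) : ℝ) : ℂ) ^ w = (2 * π : ℂ) ^ w * (n + 1) ^ w := by
      rw [ofReal_mul, mul_cpow_ofReal_nonneg (by positivity) (by positivity)]
      push_cast
      rfl
    rw [hcpow, cpow_neg]
    simp only [mul_one, div_eq_mul_inv, mul_inv]
    ring
  · convert hasSum_planck (u := t) (by simpa using ht) using 2 with n
    push_cast
    ring_nf
  · refine (((Real.summable_one_div_nat_add_rpow 1 w.re).2 hw).mul_left
      ((2 * π) ^ (-w.re))).congr fun n => ?_
    rw [norm_one, abs_of_nonneg (by positivity), Real.rpow_neg (by positivity),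
      Real.mul_rpow (x := 2 * π) (by positivity) (by positivity), one_div, one_div, mul_inv]

lemma StripDecay.integrable_exp_mul {F : ℂ → ℂ} {k : ℕ} {C : ℝ} (hF : StripDecay F k C) {w : ℂ}
    (hw : k < w.re) (hw' : w.re < k + 1) : Integrable fun b : ℝ => exp (w * b) * F b := by
  have hδ : 0 < min (w.re - k) (k + 1 - w.re) := lt_min (by linarith) (by linarith)
  have hcont : Continuous fun b : ℝ => exp (w * b) * F b := by
    refine .mul (by fun_prop) (continuous_iff_continuousAt.2 fun b => ?_)
    exact (hF.differentiableAt (by simp)).continuousAt.comp (by fun_prop)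
  refine ((integrable_exp_neg_mul_abs hδ).const_mul C).mono' hcont.aestronglyMeasurable
    (.of_forall fun b => ?_)
  have hC := hF.nonneg
  have hexponent : w.re * b + (-(k * b) - max b 0) ≤
      -min (w.re - k) (k + 1 - w.re) * |b| := by
    rcases le_total 0 b with hb | hb
    · rw [abs_of_nonneg hb, max_eq_left hb]
      nlinarith [min_le_right (w.re - k) (k + 1 - w.re)]
    · rw [abs_of_nonpos hb, max_eq_right hb]
      nlinarith [min_le_left (w.re - k) (k + 1 - w.re)]
  calc ‖exp (w * b) * F b‖ ≤ Real.exp (w.re * b) * (C * Real.exp (-(k * b) - max b 0)) := by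
        rw [norm_mul, Complex.norm_exp, re_mul_ofReal]
        gcongr
        simpa using hF.norm_le (ζ := b) (by simp)
    _ = C * Real.exp (w.re * b + (-(k * b) - max b 0)) := by rw [Real.exp_add]; ring
    _ ≤ _ := by gcongr

lemma StripDecay.mellinConvergent {G : ℂ → ℂ} {k : ℕ} {C : ℝ}
    (hG : StripDecay (fun ζ => G (exp ζ)) k C) {w : ℂ} (hw : k < w.re) (hw' : w.re < k + 1) :
    MellinConvergent (fun v : ℝ => G v) w := by
  rw [mellinConvergent_iff_integrable_exp]
  simpa only [ofReal_exp] using hG.integrable_exp_mul hw hw'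

lemma hasMellin_sub_two_mul_comp_two_mul {f : ℝ → ℂ} {w : ℂ} (hf : MellinConvergent f w) :
    HasMellin (fun v => f v - 2 * f (2 * v)) w ((1 - 2 ^ (1 - w)) * mellin f w) := by
  have h2 := (MellinConvergent.comp_mul_left (f := f) (s := w) two_pos).2 hf
  have h := hasMellin_sub hf (h2.const_smul (2 : ℂ))
  rw [mellin_const_smul, mellin_comp_mul_left f w two_pos] at h
  simp only [smul_eq_mul] at h
  convert h using 1
  rw [sub_eq_add_neg 1 w, cpow_add _ _ two_ne_zero, cpow_one, ofReal_ofNat]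
  ring

lemma regPlanck_sub_two_mul (v : ℝ) :
    regPlanck v - 2 * regPlanck (2 * v : ℝ) = planck v - 2 * planck (2 * v : ℝ) := by
  rw [regPlanck, regPlanck, ofReal_mul, ofReal_ofNat, mul_left_comm _ (2 : ℂ), mul_inv 2]
  ring

lemma norm_ofReal_le_two_mul_re {v : ℝ} (hv : 0 < v) : ‖(v : ℂ)‖ ≤ 2 * (v : ℂ).re := by
  rw [norm_real, Real.norm_of_nonneg hv.le, ofReal_re]
  linarith

lemma differentiableAt_mellin_planck_sub {w : ℂ} (hw : 0 < w.re) (hw' : w.re < 2) :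
    DifferentiableAt ℂ (mellin fun v : ℝ => planck v - 2 * planck (2 * v : ℝ)) w := by
  have hcont : ContinuousOn (fun v : ℝ => planck v - 2 * planck (2 * v : ℝ)) (Set.Ioi 0) := by
    have hplanck : ∀ v : ℝ, 0 < v → ContinuousAt planck v := fun v hv =>
      (differentiableAt_planck (by simpa using hv)).continuousAt
    intro v (hv : 0 < v)
    refine ContinuousAt.continuousWithinAt (.sub ?_ (.mul continuousAt_const ?_))
    · exact (hplanck v hv).comp (f := fun v : ℝ => (v : ℂ)) (by fun_prop)
    · exact (hplanck (2 * v) (by positivity)).comp (f := fun v : ℝ => ((2 * v : ℝ) : ℂ))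
        (by fun_prop)
  refine mellin_differentiableAt_of_isBigO_rpow (a := 2) (b := 0)
    (hcont.locallyIntegrableOn measurableSet_Ioi) (.of_bound 3 ?_) hw' (.of_bound 48 ?_) hw
  · filter_upwards [eventually_gt_atTop 0] with v hv
    have hle : ∀ x : ℝ, 0 < x → ‖planck x‖ ≤ 1 / x ^ 2 := fun x hx => by
      refine (norm_planck_le (by simpa using hx) two_ne_zero).trans ?_
      rw [ofReal_re, div_le_div_iff₀ (by positivity) (by positivity), mul_pow]
      norm_num
      gcongr
      nlinarith [Real.pi_gt_three]
    rw [Real.rpow_neg hv.le, Real.rpow_two, norm_inv, norm_pow, Real.norm_of_nonneg hv.le]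
    calc ‖planck v - 2 * planck (2 * v : ℝ)‖ ≤ ‖planck v‖ + 2 * ‖planck (2 * v : ℝ)‖ := by
          simpa using norm_sub_le (planck v) (2 * planck (2 * v : ℝ))
      _ ≤ 1 / v ^ 2 + 2 * (1 / (2 * v) ^ 2) := by gcongr <;> exact hle _ (by positivity)
      _ ≤ 3 * (v ^ 2)⁻¹ := by
          rw [mul_pow]; field_simp; norm_num
  · filter_upwards [self_mem_nhdsWithin] with v (hv : 0 < v)
    have hle : ∀ x : ℝ, 0 < x → ‖regPlanck x‖ ≤ 16 := fun x hx =>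
      norm_regPlanck_le_const (by simpa using hx) (norm_ofReal_le_two_mul_re hx)
    rw [← regPlanck_sub_two_mul, neg_zero, Real.rpow_zero, norm_one, mul_one]
    calc _ ≤ ‖regPlanck v‖ + 2 * ‖regPlanck (2 * v : ℝ)‖ := by
          simpa using norm_sub_le (regPlanck v) (2 * regPlanck (2 * v : ℝ))
      _ ≤ 16 + 2 * 16 := by gcongr <;> exact hle _ (by positivity)
      _ = 48 := by norm_num

lemma differentiable_update_sub_one_mul_riemannZeta :
    Differentiable ℂ (Function.update (fun w => (w - 1) * riemannZeta w) 1 1) := by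
  have hne : ∀ w : ℂ, w ≠ 1 →
      DifferentiableAt ℂ (Function.update (fun w => (w - 1) * riemannZeta w) 1 1) w :=
    fun w hw =>
    ((differentiableAt_id.sub_const 1).mul
      (differentiableAt_riemannZeta hw)).congr_of_eventuallyEq
        ((eventually_ne_nhds hw).mono fun z hz => Function.update_of_ne hz _ _)
  intro w
  rcases eq_or_ne w 1 with rfl | hw
  · exact (analyticAt_of_differentiable_on_punctured_nhds_of_continuousAt
      (eventually_nhdsWithin_of_forall hne)
      (continuousAt_update_same.2 riemannZeta_residue_one)).differentiableAt
  · exact hne w hw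

lemma differentiableAt_cpow_neg_mul_Gamma {w : ℂ} (hw : 0 < w.re) :
    DifferentiableAt ℂ (fun w : ℂ => (2 * π : ℂ) ^ (-w) * Gamma w) w := by
  have hpi : (2 * π : ℂ) ≠ 0 := by simp [Real.pi_ne_zero]
  refine .mul (.const_cpow (by fun_prop) (.inl hpi)) (differentiableAt_Gamma w fun m hm => ?_)
  rw [hm, neg_re, natCast_re] at hw
  exact absurd m.cast_nonneg (not_le.2 (neg_pos.1 hw))

lemma sub_one_mul_mellin_planck_sub {w : ℂ} (hw : 0 < w.re) (hw' : w.re < 2) :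
    (w - 1) * mellin (fun v : ℝ => planck v - 2 * planck (2 * v : ℝ)) w =
      (1 - 2 ^ (1 - w)) * ((2 * π : ℂ) ^ (-w) * Gamma w *
        Function.update (fun w => (w - 1) * riemannZeta w) 1 1 w) := by
  set U : Set ℂ := {w | 0 < w.re ∧ w.re < 2}
  have hU : IsOpen U :=
    (isOpen_lt continuous_const continuous_re).inter (isOpen_lt continuous_re continuous_const)
  have hconv : Convex ℝ U := (convex_halfSpace_re_gt 0).inter (convex_halfSpace_re_lt 2)
  have hleft : DifferentiableOn ℂ (fun w => (w - 1) *
      mellin (fun v : ℝ => planck v - 2 * planck (2 * v : ℝ)) w) U := fun z hz =>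
    ((differentiableAt_id.sub_const 1).mul
      (differentiableAt_mellin_planck_sub hz.1 hz.2)).differentiableWithinAt
  have hright : DifferentiableOn ℂ (fun w : ℂ => (1 - 2 ^ (1 - w)) *
      ((2 * π : ℂ) ^ (-w) * Gamma w *
        Function.update (fun w => (w - 1) * riemannZeta w) 1 1 w)) U := fun z hz =>
    (DifferentiableAt.mul ((DifferentiableAt.const_cpow (by fun_prop)
      (.inl two_ne_zero)).const_sub 1) ((differentiableAt_cpow_neg_mul_Gamma hz.1).mul
        (differentiable_update_sub_one_mul_riemannZeta z))).differentiableWithinAt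
  refine (hleft.analyticOnNhd hU).eqOn_of_preconnected_of_eventuallyEq
    (hright.analyticOnNhd hU) hconv.isPreconnected (z₀ := (3 / 2 : ℝ)) ⟨?_, ?_⟩ ?_ ⟨hw, hw'⟩
  · norm_num
  · norm_num
  filter_upwards [hU.mem_nhds (show ((3 / 2 : ℝ) : ℂ) ∈ U by constructor <;> norm_num),
    (isOpen_lt continuous_const continuous_re).mem_nhds
      (show ((3 / 2 : ℝ) : ℂ) ∈ {z : ℂ | 1 < z.re} by norm_num)] with z hz (hz1 : 1 < z.re)
  have hconvergent : MellinConvergent (fun v : ℝ => planck v) z :=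
    stripDecay_planck.mellinConvergent (by simpa using hz1) (by have := hz.2; norm_num; linarith)
  rw [(hasMellin_sub_two_mul_comp_two_mul hconvergent).2, mellin_planck hz1, planckMellin,
    Function.update_of_ne (by rintro rfl; simp at hz1)]
  ring

lemma mellin_regPlanck {w : ℂ} (hw : 0 < w.re) (hw' : w.re < 1) :
    mellin (fun v : ℝ => regPlanck v) w = planckMellin w := by
  have hw1 : w ≠ 1 := by rintro rfl; simp at hw'
  have htwo : (1 : ℂ) - 2 ^ (1 - w) ≠ 0 := by
    refine sub_ne_zero.2 fun h => ?_
    have hnorm : ‖(2 : ℂ) ^ (1 - w)‖ = 2 ^ (1 - w.re) := by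
      simpa using norm_cpow_eq_rpow_re_of_pos two_pos (1 - w)
    rw [← h, norm_one] at hnorm
    exact (Real.one_lt_rpow one_lt_two (by linarith)).ne hnorm
  have hconvergent : MellinConvergent (fun v : ℝ => regPlanck v) w :=
    stripDecay_regPlanck.mellinConvergent (by simpa using hw) (by simpa using hw')
  have h := sub_one_mul_mellin_planck_sub hw (by linarith)
  simp only [← regPlanck_sub_two_mul] at h
  rw [(hasMellin_sub_two_mul_comp_two_mul hconvergent).2, Function.update_of_ne hw1] at h
  refine mul_left_cancel₀ (mul_ne_zero (sub_ne_zero.2 hw1) htwo) ?_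
  rw [planckMellin]
  linear_combination h

/-- The twisted self-convolution of the regularised Planck kernel: the holomorphic extension of
`Φ(·, s)` to a strip, in the variable `ζ = log √t`. -/
noncomputable def phiStrip (s ζ : ℂ) : ℂ :=
  twistedConv (fun ζ => regPlanck (exp ζ)) (fun ζ => regPlanck (exp ζ)) s ζ

/-- The two terms by which removing the poles of the Planck kernels changes their twisted
convolution: the residue terms of `Φ` and `κ`, in the variable `ζ = log √t`. -/
noncomputable def polarPart (s ζ : ℂ) : ℂ :=
  (2 * π : ℂ)⁻¹ * (exp (-(2 + s) * ζ) * planckMellin (1 + s) +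
    exp (-(2 - s) * ζ) * planckMellin (1 - s))

lemma differentiableAt_phiStrip {s ζ : ℂ} (hs : |s.re| < 1) (hζ : |ζ.im| < 1) :
    DifferentiableAt ℂ (phiStrip s) ζ :=
  stripDecay_regPlanck.differentiableAt_twistedConv stripDecay_regPlanck hs hζ

lemma phiStrip_neg (s ζ : ℂ) : phiStrip (-s) ζ = phiStrip s ζ :=
  twistedConv_neg _ _ s ζ

lemma polarPart_neg (s ζ : ℂ) : polarPart (-s) ζ = polarPart s ζ := by
  rw [polarPart, polarPart, sub_neg_eq_add, sub_neg_eq_add, ← sub_eq_add_neg, ← sub_eq_add_neg,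
    add_comm (exp _ * _)]

lemma exp_mul_comp_add (H : ℝ → ℂ) (w : ℂ) (r b : ℝ) :
    exp (w * b) * H (r + b) = exp (-w * r) * (exp (w * (r + b : ℝ)) * H (r + b)) := by
  rw [← mul_assoc, ← Complex.exp_add]
  push_cast
  ring_nf

lemma exp_neg_mul_comp_sub (H : ℝ → ℂ) (w : ℂ) (r b : ℝ) :
    exp (-w * b) * H (r - b) = exp (-w * r) * (exp (w * (r - b : ℝ)) * H (r - b)) := by
  simpa [sub_eq_add_neg] using exp_mul_comp_add H w r (-b)

lemma exp_mul_planck_mul_planck (s ζ b : ℂ) :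
    exp (-s * b) * (planck (exp (ζ + b)) * planck (exp (ζ - b))) =
      exp (-s * b) * (regPlanck (exp (ζ + b)) * regPlanck (exp (ζ - b))) +
        (2 * π : ℂ)⁻¹ * exp (-ζ) * (exp (-(1 + s) * b) * regPlanck (exp (ζ - b)) +
          exp ((1 - s) * b) * planck (exp (ζ + b))) := by
  have hadd : exp (-s * b) * exp (-(ζ + b)) = exp (-ζ) * exp (-(1 + s) * b) := by
    rw [← Complex.exp_add, ← Complex.exp_add]
    ring_nf
  have hsub : exp (-s * b) * exp (-(ζ - b)) = exp (-ζ) * exp ((1 - s) * b) := by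
    rw [← Complex.exp_add, ← Complex.exp_add]
    ring_nf
  simp only [regPlanck, mul_inv, ← Complex.exp_neg]
  linear_combination 2⁻¹ * (π : ℂ)⁻¹ * planck (exp (ζ + b)) * hsub +
    2⁻¹ * (π : ℂ)⁻¹ * (planck (exp (ζ - b)) - 2⁻¹ * (π : ℂ)⁻¹ * exp (-(ζ - b))) * hadd

lemma integral_exp_mul_regPlanck_exp {w : ℂ} (hw : 0 < w.re) (hw' : w.re < 1) :
    ∫ b : ℝ, exp (w * b) * regPlanck (exp b) = planckMellin w := by
  simpa only [mellin_eq_integral_exp, ofReal_exp] using mellin_regPlanck hw hw'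

lemma integral_exp_mul_planck_exp {w : ℂ} (hw : 1 < w.re) :
    ∫ b : ℝ, exp (w * b) * planck (exp b) = planckMellin w := by
  simpa only [mellin_eq_integral_exp, ofReal_exp] using mellin_planck hw

lemma twistedConv_planck_ofReal_of_re_neg {s : ℂ} (hs : -1 < s.re) (hs' : s.re < 0) (r : ℝ) :
    twistedConv (fun ζ => planck (exp ζ)) (fun ζ => planck (exp ζ)) s r =
      phiStrip s r + polarPart s r := by
  set g : ℝ → ℂ := fun b => regPlanck (exp b)
  set E : ℝ → ℂ := fun b => planck (exp b)
  have hgg : Integrable fun b : ℝ => exp (-s * b) *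
      (regPlanck (exp (r + b)) * regPlanck (exp (r - b))) :=
    stripDecay_regPlanck.integrable_integrand stripDecay_regPlanck
      (abs_lt.2 ⟨hs, hs'.trans one_pos⟩) (by simp)
  have hg : Integrable fun b : ℝ => exp ((1 + s) * b) * g b :=
    stripDecay_regPlanck.integrable_exp_mul (by simp; linarith) (by simp; linarith)
  have hE : Integrable fun b : ℝ => exp ((1 - s) * b) * E b :=
    stripDecay_planck.integrable_exp_mul (by simp; linarith) (by simp; linarith)
  have hg' := (hg.comp_sub_left r).const_mul ((2 * π : ℂ)⁻¹ * exp (-r) * exp (-(1 + s) * r))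
  have hE' := (hE.comp_add_left r).const_mul ((2 * π : ℂ)⁻¹ * exp (-r) * exp (-(1 - s) * r))
  have hsplit : ∀ b : ℝ, exp (-s * b) * (planck (exp (r + b)) * planck (exp (r - b))) =
      exp (-s * b) * (regPlanck (exp (r + b)) * regPlanck (exp (r - b))) +
        ((2 * π : ℂ)⁻¹ * exp (-r) * exp (-(1 + s) * r) *
            (exp ((1 + s) * (r - b : ℝ)) * g (r - b)) +
          (2 * π : ℂ)⁻¹ * exp (-r) * exp (-(1 - s) * r) *
            (exp ((1 - s) * (r + b : ℝ)) * E (r + b))) := fun b => by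
    rw [exp_mul_planck_mul_planck, mul_assoc _ (exp (-(1 + s) * r)),
      mul_assoc _ (exp (-(1 - s) * r)), ← exp_neg_mul_comp_sub, ← exp_mul_comp_add, mul_add]
    simp only [g, E, ofReal_add, ofReal_sub]
  rw [twistedConv, integral_congr_ae (.of_forall hsplit),
    integral_add hgg (by exact hg'.add hE'), integral_add hg' hE', integral_const_mul,
    integral_const_mul, integral_sub_left_eq_self (fun b : ℝ => exp ((1 + s) * b) * g b),
    integral_add_left_eq_self (fun b : ℝ => exp ((1 - s) * b) * E b),
    integral_exp_mul_regPlanck_exp (by simp; linarith) (by simp; linarith),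
    integral_exp_mul_planck_exp (by simp; linarith), phiStrip, twistedConv, polarPart,
    mul_assoc _ (exp (-r : ℂ)), mul_assoc _ (exp (-r : ℂ)), ← Complex.exp_add, ← Complex.exp_add]
  congr 1
  ring_nf

lemma differentiableAt_planckMellin {w : ℂ} (hw : 0 < w.re) (hw1 : w ≠ 1) :
    DifferentiableAt ℂ planckMellin w :=
  (differentiableAt_cpow_neg_mul_Gamma hw).mul (differentiableAt_riemannZeta hw1)

lemma continuousAt_polarPart_param {s : ℂ} (hs0 : s ≠ 0) (hs : |s.re| < 1) (ζ : ℂ) :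
    ContinuousAt (fun s => polarPart s ζ) s := by
  obtain ⟨h1, h2⟩ := abs_lt.1 hs
  have hadd : ContinuousAt (fun s => planckMellin (1 + s)) s :=
    ContinuousAt.comp (f := fun s : ℂ => 1 + s) (differentiableAt_planckMellin
      (by simp; linarith) (by simpa using hs0)).continuousAt (by fun_prop)
  have hsub : ContinuousAt (fun s => planckMellin (1 - s)) s :=
    ContinuousAt.comp (f := fun s : ℂ => 1 - s) (differentiableAt_planckMellin
      (by simp; linarith) (by simpa using hs0)).continuousAt (by fun_prop)
  unfold polarPart
  fun_prop

lemma twistedConv_planck_ofReal {s : ℂ} (hs0 : s ≠ 0) (hs : |s.re| < 1) (r : ℝ) :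
    twistedConv (fun ζ => planck (exp ζ)) (fun ζ => planck (exp ζ)) s r =
      phiStrip s r + polarPart s r := by
  obtain ⟨h1, h2⟩ := abs_lt.1 hs
  rcases lt_trichotomy s.re 0 with h | h | h
  · exact twistedConv_planck_ofReal_of_re_neg h1 h r
  · have hmem : s ∈ closure {z : ℂ | z.re < 0} := by
      rw [closure_setOfPred_re_lt]
      exact h.le
    have hfreq : ∃ᶠ z in 𝓝 s, z.re < 0 := mem_closure_iff_frequently.1 hmem
    have hev : ∀ᶠ z in 𝓝 s, -1 < z.re := continuous_re.continuousAt.eventually_const_lt h1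
    refine tendsto_nhds_unique_of_frequently_eq
      (stripDecay_planck.differentiableAt_twistedConv_param stripDecay_planck hs
        (by simp)).continuousAt
      ((stripDecay_regPlanck.differentiableAt_twistedConv_param stripDecay_regPlanck hs
        (by simp)).continuousAt.add (continuousAt_polarPart_param hs0 hs r))
      ((hfreq.and_eventually hev).mono fun z hz =>
        twistedConv_planck_ofReal_of_re_neg hz.2 hz.1 r)
  · have hneg := twistedConv_planck_ofReal_of_re_neg (s := -s) (by simpa using h2)
      (by simpa using h) r
    rwa [twistedConv_neg, phiStrip_neg, polarPart_neg] at hneg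

lemma twistedConv_planck {s ζ : ℂ} (hs0 : s ≠ 0) (hs : |s.re| < 1) (hζ : |ζ.im| < 1) :
    twistedConv (fun ζ => planck (exp ζ)) (fun ζ => planck (exp ζ)) s ζ =
      phiStrip s ζ + polarPart s ζ := by
  set U : Set ℂ := {ζ | |ζ.im| < 1}
  have hU : IsOpen U := isOpen_lt (by fun_prop) continuous_const
  have hUc : Convex ℝ U := by
    have : U = {ζ | -1 < ζ.im} ∩ {ζ | ζ.im < 1} := Set.ext fun ζ => by simp [U, abs_lt]
    rw [this]
    exact (convex_halfSpace_im_gt _).inter (convex_halfSpace_im_lt _)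
  have hT : DifferentiableOn ℂ
      (twistedConv (fun ζ => planck (exp ζ)) (fun ζ => planck (exp ζ)) s) U := fun ζ hζ =>
    (stripDecay_planck.differentiableAt_twistedConv stripDecay_planck hs hζ).differentiableWithinAt
  have hS : DifferentiableOn ℂ (fun ζ => phiStrip s ζ + polarPart s ζ) U := fun ζ hζ =>
    ((differentiableAt_phiStrip hs hζ).add
      (by unfold polarPart; fun_prop)).differentiableWithinAt
  have hofReal : Tendsto ((↑) : ℝ → ℂ) (𝓝[≠] 0) (𝓝[≠] 0) :=
    tendsto_nhdsWithin_iff.2 ⟨(continuous_ofReal.tendsto 0).mono_left nhdsWithin_le_nhds,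
      eventually_nhdsWithin_of_forall fun r hr => ofReal_ne_zero.2 hr⟩
  exact (hT.analyticOnNhd hU).eqOn_of_preconnected_of_frequently_eq (hS.analyticOnNhd hU)
    hUc.isPreconnected (z₀ := 0) (by simp [U])
    (hofReal.frequently (Frequently.of_forall (twistedConv_planck_ofReal hs0 hs))) hζ

lemma integrable_exp_mul_exp_neg_mul_cosh (s : ℂ) {Z : ℂ} (hZ : 0 < Z.re) :
    Integrable fun c : ℝ => exp (s * c) * exp (-Z * Real.cosh c) := by
  obtain ⟨k, hk⟩ := exists_nat_gt |s.re|
  have hcont : Continuous fun c : ℝ => exp (s * c) * exp (-Z * Real.cosh c) := by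
    have := Real.continuous_cosh
    fun_prop
  refine ((integrable_exp_neg_mul_abs (sub_pos.2 hk)).const_mul
    (k.factorial * (2 / Z.re) ^ k)).mono' hcont.aestronglyMeasurable (.of_forall fun c => ?_)
  have hsc : s.re * c ≤ |s.re| * |c| := (le_abs_self _).trans_eq (abs_mul _ _)
  calc ‖exp (s * c) * exp (-Z * Real.cosh c)‖
      = Real.exp (s.re * c) * Real.exp (-(Z.re * Real.cosh c)) := by
        rw [norm_mul, Complex.norm_exp, Complex.norm_exp, re_mul_ofReal, re_mul_ofReal, neg_re,
          neg_mul]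
    _ ≤ Real.exp (|s.re| * |c|) * (k.factorial / (Z.re * Real.cosh c) ^ k) := by
        gcongr
        exact exp_neg_le_factorial_div_pow (by positivity) k
    _ ≤ Real.exp (|s.re| * |c|) * (k.factorial / (Z.re * (Real.exp |c| / 2)) ^ k) := by
        gcongr
        linarith [exp_abs_le_two_mul_cosh c]
    _ = Real.exp (|s.re| * |c|) * (k.factorial * (2 / Z.re) ^ k * Real.exp (-(k * |c|))) := by
        rw [Real.exp_neg, Real.exp_nat_mul]
        simp only [mul_pow, div_pow]
        field_simp
    _ = k.factorial * (2 / Z.re) ^ k * Real.exp (-(k - |s.re|) * |c|) := by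
        rw [mul_left_comm, ← Real.exp_add]
        ring_nf

lemma integral_exp_neg_mul_exp_neg_mul_cosh (s : ℂ) {Z : ℂ} (hZ : 0 < Z.re) :
    ∫ c : ℝ, exp (-s * c) * exp (-Z * Real.cosh c) = 2 * Kbes s Z := by
  have hpos := integrable_exp_mul_exp_neg_mul_cosh s hZ
  have hneg := integrable_exp_mul_exp_neg_mul_cosh (-s) hZ
  have hreflect : ∫ c in Set.Iic (0 : ℝ), exp (-s * c) * exp (-Z * Real.cosh c) =
      ∫ c in Set.Ioi (0 : ℝ), exp (s * c) * exp (-Z * Real.cosh c) := by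
    rw [← neg_zero, ← integral_comp_neg_Ioi, neg_zero]
    refine setIntegral_congr_fun measurableSet_Ioi fun c _ => ?_
    simp only [ofReal_neg, neg_mul_neg, Real.cosh_neg]
  rw [← intervalIntegral.integral_Iic_add_Ioi hneg.integrableOn hneg.integrableOn, hreflect,
    ← integral_add hpos.integrableOn hneg.integrableOn, Kbes, ← integral_const_mul]
  refine integral_congr_ae (.of_forall fun c => ?_)
  simp only [Complex.cosh, neg_mul]
  ring

lemma twistedConv_exp_neg {p q : ℝ} (hp : 0 < p) (hq : 0 < q) (s : ℂ) {ζ : ℂ}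
    (hζ : 0 < (exp ζ).re) :
    twistedConv (fun ζ => exp (-(2 * π * p * exp ζ))) (fun ζ => exp (-(2 * π * q * exp ζ))) s ζ =
      2 * ((q : ℂ) ^ (-s / 2) * (p : ℂ) ^ (s / 2) *
        Kbes s (4 * π * exp ζ * Real.sqrt (p * q))) := by
  obtain ⟨P, rfl⟩ : ∃ P, Real.exp P = p := ⟨_, Real.exp_log hp⟩
  obtain ⟨Q, rfl⟩ : ∃ Q, Real.exp Q = q := ⟨_, Real.exp_log hq⟩
  have hsqrt : Real.sqrt (Real.exp P * Real.exp Q) = Real.exp ((P + Q) / 2) := by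
    rw [Real.exp_half, Real.exp_add]
  have hZ : 0 < (4 * π * exp ζ * Real.exp ((P + Q) / 2) : ℂ).re := by
    rw [re_mul_ofReal, mul_assoc, show (4 : ℂ) = (4 : ℝ) by simp, re_ofReal_mul, re_ofReal_mul]
    have := Real.pi_pos
    positivity
  rw [hsqrt, mul_left_comm, ← integral_exp_neg_mul_exp_neg_mul_cosh s hZ, twistedConv,
    ← integral_add_right_eq_self _ ((Q - P) / 2), ← integral_const_mul]
  refine integral_congr_ae (.of_forall fun c => ?_)
  have hadd : exp P * exp (ζ + (c + (Q - P) / 2)) = exp ζ * exp ((P + Q) / 2) * exp c := by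
    simp only [← Complex.exp_add]
    ring_nf
  have hsub : exp Q * exp (ζ - (c + (Q - P) / 2)) = exp ζ * exp ((P + Q) / 2) * exp (-c) := by
    simp only [← Complex.exp_add]
    ring_nf
  simp only [ofReal_exp_cpow, ← Complex.exp_add]
  push_cast [Complex.cosh]
  congr 1
  linear_combination -2 * π * hadd - 2 * π * hsub

lemma StripDecay.summable_norm {ι : Type*} {f : ι → ℂ → ℂ} {k : ℕ} {C : ι → ℝ}
    (hf : ∀ i, StripDecay (f i) k (C i)) (hC : Summable C) {ζ : ℂ} (hζ : |ζ.im| ≤ 1) :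
    Summable fun i => ‖f i ζ‖ :=
  .of_nonneg_of_le (fun _ => norm_nonneg _) (fun i => (hf i).norm_le hζ) (hC.mul_right _)

lemma StripDecay.hasSum_twistedConv {ι κ : Type*} [Countable ι] [Countable κ] {f : ι → ℂ → ℂ}
    {g : κ → ℂ → ℂ} {F G : ℂ → ℂ} {k : ℕ} {C : ι → ℝ} {D : κ → ℝ}
    (hf : ∀ i, StripDecay (f i) k (C i)) (hg : ∀ j, StripDecay (g j) k (D j))
    (hC : Summable C) (hD : Summable D)
    (hF : ∀ ζ : ℂ, |ζ.im| ≤ 1 → HasSum (fun i => f i ζ) (F ζ))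
    (hG : ∀ ζ : ℂ, |ζ.im| ≤ 1 → HasSum (fun j => g j ζ) (G ζ))
    {s ζ : ℂ} (hs : |s.re| < 1) (hζ : |ζ.im| ≤ 1) :
    HasSum (fun ij : ι × κ => twistedConv (f ij.1) (g ij.2) s ζ) (twistedConv F G s ζ) := by
  have hCD : Summable fun ij : ι × κ => C ij.1 * D ij.2 :=
    hC.mul_of_nonneg hD (fun i => (hf i).nonneg) fun j => (hg j).nonneg
  set A := Real.exp (-((2 * k + 1) * ζ.re))
  unfold twistedConv
  refine hasSum_integral_of_dominated_convergence
    (fun ij b => C ij.1 * D ij.2 * A * Real.exp (-(1 - |s.re|) * |b|))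
    (fun ij => ((hf ij.1).continuous_integrand (hg ij.2) hζ).aestronglyMeasurable)
    (fun ij => .of_forall fun b => (hf ij.1).norm_integrand_le (hg ij.2) hζ b)
    (.of_forall fun b => (hCD.mul_right A).mul_right _) ?_ (.of_forall fun b => ?_)
  · simp only [tsum_mul_right]
    exact (integrable_exp_neg_mul_abs (sub_pos.2 hs)).const_mul _
  · have hadd : |(ζ + b).im| ≤ 1 := by rwa [abs_im_add_ofReal]
    have hsub : |(ζ - b).im| ≤ 1 := by rwa [abs_im_sub_ofReal]
    have hsummable : Summable fun ij : ι × κ => f ij.1 (ζ + b) * g ij.2 (ζ - b) :=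
      summable_mul_of_summable_norm (f := fun i => f i (ζ + b)) (g := fun j => g j (ζ - b))
        (summable_norm hf hC hadd) (summable_norm hg hD hsub)
    exact ((hF _ hadd).mul (hG _ hsub) hsummable).mul_left _

lemma sum_divisorsAntidiagonal_cpow (s : ℂ) {n : ℕ} (hn : 0 < n) :
    ∑ i ∈ n.divisorsAntidiagonal, (i.2 : ℂ) ^ (-s / 2) * (i.1 : ℂ) ^ (s / 2) =
      csigma (-s) n * (n : ℂ) ^ (s / 2) := by
  rw [Nat.sum_divisorsAntidiagonal' fun p q : ℕ => (q : ℂ) ^ (-s / 2) * (p : ℂ) ^ (s / 2), csigma,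
    sum_mul]
  refine sum_congr rfl fun d hd => ?_
  obtain ⟨k, rfl⟩ := Nat.dvd_of_mem_divisors hd
  have hd0 : 0 < d := Nat.pos_of_mul_pos_right hn
  rw [Nat.mul_div_cancel_left _ hd0, Nat.cast_mul, natCast_mul_natCast_cpow, ← mul_assoc,
    ← cpow_add _ _ (Nat.cast_ne_zero.2 hd0.ne')]
  ring_nf

lemma hasSum_sum_divisorsAntidiagonal {E : Type*} [AddCommGroup E] [TopologicalSpace E]
    [IsTopologicalAddGroup E] [RegularSpace E] {f : ℕ → ℕ → E} {a : E}
    (hf : HasSum (fun ij : ℕ × ℕ => f (ij.1 + 1) (ij.2 + 1)) a) :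
    HasSum (fun n : ℕ => ∑ i ∈ (n + 1).divisorsAntidiagonal, f i.1 i.2) a := by
  have hpnat : HasSum (fun ij : ℕ+ × ℕ+ => f ij.1 ij.2) a := by
    rw [← (Equiv.pnatEquivNat.prodCongr Equiv.pnatEquivNat).symm.hasSum_iff]
    simpa [Function.comp_def] using hf
  rw [← sigmaAntidiagonalEquivProd.hasSum_iff] at hpnat
  have hfiber := hpnat.sigma (g := fun n : ℕ+ => ∑ i ∈ (n : ℕ).divisorsAntidiagonal, f i.1 i.2)
    fun n => by
      rw [← sum_coe_sort]
      exact hasSum_fintype _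
  rw [← Equiv.pnatEquivNat.symm.hasSum_iff] at hfiber
  simpa [Function.comp_def] using hfiber

lemma hasSum_csigma_mul_Kbes {s ζ : ℂ} (hs : |s.re| < 1) (hζ : |ζ.im| ≤ 1) :
    HasSum (fun n : ℕ => csigma (-s) (n + 1) * ((n : ℂ) + 1) ^ (s / 2) *
        Kbes s (4 * π * exp ζ * Real.sqrt (n + 1)))
      (twistedConv (fun ζ => planck (exp ζ)) (fun ζ => planck (exp ζ)) s ζ / 2) := by
  have hdecay : ∀ n : ℕ, StripDecay (fun ζ => exp (-(2 * π * (n + 1 : ℝ) * exp ζ))) 2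
      (1 / (n + 1 : ℝ) ^ 2) := fun n => stripDecay_exp_neg (by linarith [n.cast_nonneg (α := ℝ)])
  have hsummable : Summable fun n : ℕ => 1 / (n + 1 : ℝ) ^ 2 := by
    simpa using (summable_nat_add_iff 1).2 (Real.summable_one_div_nat_pow.2 one_lt_two)
  have hplanck : ∀ ζ : ℂ, |ζ.im| ≤ 1 →
      HasSum (fun n : ℕ => exp (-(2 * π * (n + 1 : ℝ) * exp ζ))) (planck (exp ζ)) :=
    fun ζ hζ => by simpa using hasSum_planck (exp_mem_sector hζ).1
  have hdouble := StripDecay.hasSum_twistedConv hdecay hdecay hsummable hsummable hplanck hplanck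
    hs hζ
  have hterm : ∀ ij : ℕ × ℕ, 2 * (((ij.2 + 1 : ℕ) : ℂ) ^ (-s / 2) * ((ij.1 + 1 : ℕ) : ℂ) ^ (s / 2) *
      Kbes s (4 * π * exp ζ * Real.sqrt ((ij.1 + 1 : ℕ) * (ij.2 + 1 : ℕ)))) =
      twistedConv (fun ζ => exp (-(2 * π * (ij.1 + 1 : ℝ) * exp ζ)))
        (fun ζ => exp (-(2 * π * (ij.2 + 1 : ℝ) * exp ζ))) s ζ := fun ij => by
    have := twistedConv_exp_neg (p := ij.1 + 1) (q := ij.2 + 1) (by positivity) (by positivity) s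
      (exp_mem_sector hζ).1
    push_cast at this ⊢
    exact this.symm
  refine ((hasSum_sum_divisorsAntidiagonal (f := fun i j => 2 * ((j : ℂ) ^ (-s / 2) *
    (i : ℂ) ^ (s / 2) * Kbes s (4 * π * exp ζ * Real.sqrt (i * j))))
      (hdouble.congr_fun hterm)).div_const 2).congr_fun fun n => ?_
  have hfiber := sum_divisorsAntidiagonal_cpow s n.succ_pos
  rw [Nat.succ_eq_add_one, Nat.cast_succ] at hfiber
  rw [← hfiber, sum_mul, sum_div]
  refine sum_congr rfl fun i hi => ?_
  rw [mul_div_cancel_left₀ _ two_ne_zero, ← Nat.cast_mul, (Nat.mem_divisorsAntidiagonal.1 hi).1,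
    Nat.cast_succ]

lemma exp_log_div_two {t : ℝ} (ht : 0 < t) : exp ((Real.log t : ℂ) / 2) = Real.sqrt t := by
  rw [Real.sqrt_eq_rpow, Real.rpow_def_of_pos ht, ofReal_exp]
  push_cast
  ring_nf

lemma hasSum_csigma_mul_Kbes_sqrt {s : ℂ} (hs0 : s ≠ 0) (hs : |s.re| < 1) {t : ℝ} (ht : 0 < t)
    {θ : ℝ} (hθ : |θ| < 1) :
    HasSum (fun n : ℕ => csigma (-s) (n + 1) * ((n : ℂ) + 1) ^ (s / 2) *
        Kbes s (4 * π * exp (θ * I) * Real.sqrt ((n + 1) * t)))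
      ((phiStrip s (Real.log t / 2 + θ * I) + polarPart s (Real.log t / 2 + θ * I)) / 2) := by
  have him : (Real.log t / 2 + θ * I : ℂ).im = θ := by simp
  rw [← twistedConv_planck hs0 hs (by rwa [him])]
  refine (hasSum_csigma_mul_Kbes hs (by rw [him]; exact hθ.le)).congr_fun fun n => ?_
  rw [Complex.exp_add, exp_log_div_two ht, Real.sqrt_mul (by positivity), ofReal_mul]
  ring_nf

lemma inv_two_pi_mul_exp_mul_planckMellin {t : ℝ} (ht : 0 < t) (s : ℂ) :
    (2 * π : ℂ)⁻¹ * (exp (-(2 + s) * (Real.log t / 2)) * planckMellin (1 + s)) =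
      Gamma (1 + s) * riemannZeta (1 + s) * (t : ℂ) ^ (-1 - s / 2) / (2 * π : ℂ) ^ (2 + s) := by
  have hpi : (2 * π : ℂ) ≠ 0 := by simp [Real.pi_ne_zero]
  have ht0 : (t : ℂ) ≠ 0 := ofReal_ne_zero.2 ht.ne'
  have hexp : exp (-(2 + s) * (Real.log t / 2)) = (t : ℂ) ^ (-1 - s / 2) := by
    rw [cpow_def_of_ne_zero ht0, ofReal_log ht.le]
    ring_nf
  have hcpow : (2 * π : ℂ) ^ (2 + s) = 2 * π * (2 * π : ℂ) ^ (1 + s) := by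
    rw [show 2 + s = 1 + (1 + s) by ring, cpow_add _ _ hpi, cpow_one]
  rw [hexp, hcpow, planckMellin, cpow_neg, div_eq_mul_inv _ (_ * _), mul_inv]
  ring

lemma exp_mul_planckMellin {t : ℝ} (ht : 0 < t) (s : ℂ) :
    exp (-(2 + s) * (Real.log t / 2)) * planckMellin (1 + s) =
      Gamma (1 + s) * riemannZeta (1 + s) * (2 * π * Real.sqrt t : ℂ) ^ (-s) / (2 * π * t) := by
  have hpi : (2 * π : ℂ) ≠ 0 := by simp [Real.pi_ne_zero]
  have hcpow : (2 * π * Real.sqrt t : ℂ) ^ (-s) = (2 * π : ℂ) ^ (-s) *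
      exp (-s * (Real.log t / 2)) := by
    have hsqrt : Real.sqrt t = Real.exp (Real.log t / 2) := by
      rw [Real.exp_half, Real.exp_log ht]
    have hmul := mul_cpow_ofReal_nonneg Real.two_pi_pos.le (Real.sqrt_nonneg t) (-s)
    rw [hsqrt, ofReal_exp_cpow, ← hsqrt] at hmul
    push_cast at hmul
    exact hmul
  have hexp : exp (-(2 + s) * (Real.log t / 2)) = exp (-s * (Real.log t / 2)) / t := by
    have hlog : exp (Real.log t : ℂ) = t := by rw [← ofReal_exp, Real.exp_log ht]
    rw [← hlog, ← Complex.exp_sub]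
    ring_nf
  rw [hcpow, hexp, planckMellin, neg_add, cpow_add _ _ hpi, cpow_neg_one]
  field_simp

lemma PhiK_eq_phiStrip {s : ℂ} (hs0 : s ≠ 0) (hs : |s.re| < 1) {t : ℝ} (ht : 0 < t) :
    PhiK t s = phiStrip s (Real.log t / 2) := by
  have hsum := (hasSum_csigma_mul_Kbes_sqrt hs0 hs ht (θ := 0) (by simp)).tsum_eq
  have hpos := inv_two_pi_mul_exp_mul_planckMellin ht s
  have hneg := inv_two_pi_mul_exp_mul_planckMellin ht (-s)
  simp only [ofReal_zero, zero_mul, Complex.exp_zero, mul_one, add_zero] at hsum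
  rw [← sub_eq_add_neg, ← sub_eq_add_neg, neg_div, sub_neg_eq_add] at hneg
  rw [PhiK]
  push_cast
  rw [hsum, polarPart]
  linear_combination hpos + hneg

lemma polarPart_jump (s ζ : ℂ) :
    I * (exp (π * I * s / 4) * polarPart s (ζ + (π / 4 : ℝ) * I) -
        exp (-π * I * s / 4) * polarPart s (ζ + (-(π / 4) : ℝ) * I)) =
      (π : ℂ)⁻¹ * (exp (-(2 + s) * ζ) * planckMellin (1 + s) +
        cos (π * s / 2) * (exp (-(2 - s) * ζ) * planckMellin (1 - s))) := by
  have hup : exp (π * I * s / 4) * exp (-(2 + s) * (ζ + (π / 4 : ℝ) * I)) =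
      exp (-π / 2 * I) * exp (-(2 + s) * ζ) := by
    simp only [← Complex.exp_add]
    push_cast
    ring_nf
  have hdown : exp (-π * I * s / 4) * exp (-(2 + s) * (ζ + (-(π / 4) : ℝ) * I)) =
      exp (π / 2 * I) * exp (-(2 + s) * ζ) := by
    simp only [← Complex.exp_add]
    push_cast
    ring_nf
  have hup' : exp (π * I * s / 4) * exp (-(2 - s) * (ζ + (π / 4 : ℝ) * I)) =
      exp (-π / 2 * I) * exp (π * s / 2 * I) * exp (-(2 - s) * ζ) := by
    simp only [← Complex.exp_add]
    push_cast
    ring_nf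
  have hdown' : exp (-π * I * s / 4) * exp (-(2 - s) * (ζ + (-(π / 4) : ℝ) * I)) =
      exp (π / 2 * I) * exp (-(π * s / 2) * I) * exp (-(2 - s) * ζ) := by
    simp only [← Complex.exp_add]
    push_cast
    ring_nf
  rw [exp_neg_pi_div_two_mul_I] at hup hup'
  rw [exp_pi_div_two_mul_I] at hdown hdown'
  rw [polarPart, polarPart, Complex.cos]
  linear_combination (2 * π : ℂ)⁻¹ * I * planckMellin (1 + s) * (hup - hdown) +
    (2 * π : ℂ)⁻¹ * I * planckMellin (1 - s) * (hup' - hdown') -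
    (π : ℂ)⁻¹ * (exp (-(2 + s) * ζ) * planckMellin (1 + s) +
      (exp (π * s / 2 * I) + exp (-(π * s / 2) * I)) / 2 *
        (exp (-(2 - s) * ζ) * planckMellin (1 - s))) * I_sq

lemma kappaK_eq_phiStrip {s : ℂ} (hs0 : s ≠ 0) (hs : |s.re| < 1) {t : ℝ} (ht : 0 < t) :
    kappaK t s = I * (exp (π * I * s / 4) * phiStrip s (Real.log t / 2 + (π / 4 : ℝ) * I) -
      exp (-π * I * s / 4) * phiStrip s (Real.log t / 2 + (-(π / 4) : ℝ) * I)) := by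
  have hpi : |π / 4| < 1 := by rw [abs_of_pos (by positivity)]; linarith [Real.pi_lt_four]
  have hpos := (hasSum_csigma_mul_Kbes_sqrt hs0 hs ht hpi).mul_left (exp (π * I * s / 4))
  have hneg := (hasSum_csigma_mul_Kbes_sqrt hs0 hs ht (by rwa [abs_neg])).mul_left
    (exp (-π * I * s / 4))
  have hsum := (hpos.sub hneg).tsum_eq
  have hjump := polarPart_jump s (Real.log t / 2)
  have hM := exp_mul_planckMellin ht s
  have hM' := exp_mul_planckMellin ht (-s)
  rw [← sub_eq_add_neg, ← sub_eq_add_neg, neg_neg] at hM'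
  rw [hM, hM'] at hjump
  rw [show ((π / 4 : ℝ) : ℂ) * I = π * I / 4 by push_cast; ring,
    show ((-(π / 4) : ℝ) : ℂ) * I = -π * I / 4 by push_cast; ring] at *
  simp only [mul_left_comm (exp _), ← mul_sub] at hsum
  rw [kappaK, etaK, hsum]
  push_cast
  linear_combination hjump

lemma exists_norm_phiStrip_le {s : ℂ} (hs : |s.re| < 1) :
    ∃ C, ∀ ζ : ℂ, |ζ.im| ≤ 1 → ‖phiStrip s ζ‖ ≤ C * Real.exp (-ζ.re) := by
  refine ⟨16 * 16 * ∫ b : ℝ, Real.exp (-(1 - |s.re|) * |b|), fun ζ hζ => ?_⟩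
  have hle := stripDecay_regPlanck.norm_twistedConv_le stripDecay_regPlanck hs hζ
  simp only [Nat.cast_zero, mul_zero, zero_add, one_mul] at hle
  rw [phiStrip]
  linarith

lemma norm_exp_mul_le (w ξ : ℂ) :
    ‖exp (w * ξ)‖ ≤ Real.exp (|w.im| * |ξ.im|) * Real.exp (w.re * ξ.re) := by
  rw [norm_exp, mul_re, ← Real.exp_add]
  gcongr
  linarith [neg_abs_le (w.im * ξ.im), abs_mul w.im ξ.im]

lemma integral_phiStrip_div_cosh {s : ℂ} (hs : |s.re| < 1) (y : ℝ) :
    ∫ a : ℝ, (exp ((1 + s / 2) * (a + (π / 2 : ℝ) * I)) *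
          phiStrip s (y + (a + (π / 2 : ℝ) * I) / 2) +
        exp ((1 + s / 2) * (a + (-(π / 2) : ℝ) * I)) *
          phiStrip s (y + (a + (-(π / 2) : ℝ) * I) / 2)) / Real.cosh a =
      2 * π * phiStrip s y := by
  obtain ⟨C, hC⟩ := exists_norm_phiStrip_le hs
  obtain ⟨hs₁, hs₂⟩ := abs_lt.1 hs
  have him {ξ : ℂ} (hξ : |ξ.im| ≤ π / 2) : |(y + ξ / 2 : ℂ).im| < 1 := by
    rw [add_im, ofReal_im, zero_add, div_ofNat_im, abs_div, abs_two]
    linarith [Real.pi_lt_four]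
  have hre (ξ : ℂ) : (y + ξ / 2 : ℂ).re = y + ξ.re / 2 := by simp
  have hpoisson := integral_strip_div_cosh (c := (1 + s.re) / 2)
    (C := Real.exp (|(1 + s / 2).im| * (π / 2)) * (C * Real.exp (-y)))
    (h := fun ξ => exp ((1 + s / 2) * ξ) * phiStrip s (y + ξ / 2)) (by linarith) (by linarith)
    ?_ ?_
  · simpa using hpoisson
  · intro ξ hξ
    have hφ := (differentiableAt_phiStrip hs (him hξ)).comp ξ
      (f := fun ξ : ℂ => (y : ℂ) + ξ / 2) (by fun_prop)
    exact (DifferentiableAt.mul (by fun_prop) hφ).differentiableWithinAt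
  · intro ξ hξ
    have hC0 : 0 ≤ C := nonneg_of_mul_nonneg_left ((norm_nonneg _).trans (hC 0 (by simp)))
      (Real.exp_pos _)
    calc ‖exp ((1 + s / 2) * ξ) * phiStrip s (y + ξ / 2)‖
        ≤ Real.exp (|(1 + s / 2).im| * (π / 2)) * Real.exp ((1 + s / 2).re * ξ.re) *
            (C * Real.exp (-(y + ξ.re / 2))) := by
          rw [norm_mul, ← hre]
          gcongr
          · exact (norm_exp_mul_le _ _).trans (by gcongr)
          · exact hC _ (him hξ).le
      _ = Real.exp (|(1 + s / 2).im| * (π / 2)) * (C * Real.exp (-y)) *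
            Real.exp ((1 + s.re) / 2 * ξ.re) := by
          rw [show -(y + ξ.re / 2) = -y + -(ξ.re / 2) by ring, Real.exp_add,
            show (1 + s.re) / 2 * ξ.re = (1 + s / 2).re * ξ.re + -(ξ.re / 2) by
              simp; ring, Real.exp_add]
          ring
      _ ≤ _ := by
          gcongr
          · linarith
          · exact le_abs_self _

lemma exp_mul_cpow_div_sq_add_sq (s : ℂ) (a y : ℝ) :
    (Real.exp (a + y) : ℂ) * (Real.exp (a + y) : ℂ) ^ (1 + s / 2) /
        ((Real.exp (a + y) : ℂ) ^ 2 + (Real.exp y : ℂ) ^ 2) =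
      exp (s / 2 * y) * exp ((1 + s / 2) * a) / (2 * Real.cosh a) := by
  have hden : (Real.exp (a + y) : ℂ) ^ 2 + (Real.exp y : ℂ) ^ 2 =
      exp (a + 2 * y) * (2 * Real.cosh a) := by
    rw [ofReal_cosh, Complex.cosh, mul_div_cancel₀ _ two_ne_zero, mul_add, ofReal_exp, ofReal_exp,
      ← Complex.exp_nat_mul, ← Complex.exp_nat_mul, ← Complex.exp_add, ← Complex.exp_add]
    push_cast
    ring_nf
  have hnum : (Real.exp (a + y) : ℂ) * (Real.exp (a + y) : ℂ) ^ (1 + s / 2) =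
      exp (a + 2 * y) * (exp (s / 2 * y) * exp ((1 + s / 2) * a)) := by
    rw [ofReal_exp_cpow, ofReal_exp]
    simp only [← Complex.exp_add]
    push_cast
    ring_nf
  rw [hden, hnum, mul_div_mul_left _ _ (Complex.exp_ne_zero _)]

lemma exp_mul_kappaK_integrand {s : ℂ} (hs0 : s ≠ 0) (hs : |s.re| < 1) (y a : ℝ) :
    (Real.exp (a + y) : ℂ) * ((Real.exp (a + y) : ℂ) ^ (1 + s / 2) * kappaK (Real.exp (a + y)) s /
        ((Real.exp (a + y) : ℂ) ^ 2 + (Real.exp y : ℂ) ^ 2)) =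
      exp (s / 2 * y) / 2 * ((exp ((1 + s / 2) * (a + (π / 2 : ℝ) * I)) *
          phiStrip s ((y / 2 : ℝ) + (a + (π / 2 : ℝ) * I) / 2) +
        exp ((1 + s / 2) * (a + (-(π / 2) : ℝ) * I)) *
          phiStrip s ((y / 2 : ℝ) + (a + (-(π / 2) : ℝ) * I) / 2)) / Real.cosh a) := by
  have hup : exp ((1 + s / 2) * (a + (π / 2 : ℝ) * I)) =
      exp ((1 + s / 2) * a) * (exp (π / 2 * I) * exp (π * I * s / 4)) := by
    simp only [← Complex.exp_add]
    push_cast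
    ring_nf
  have hdown : exp ((1 + s / 2) * (a + (-(π / 2) : ℝ) * I)) =
      exp ((1 + s / 2) * a) * (exp (-π / 2 * I) * exp (-π * I * s / 4)) := by
    simp only [← Complex.exp_add]
    push_cast
    ring_nf
  have harg (θ : ℝ) : ((y / 2 : ℝ) + (a + θ * I) / 2 : ℂ) =
      Real.log (Real.exp (a + y)) / 2 + (θ / 2 : ℝ) * I := by
    rw [Real.log_exp]
    push_cast
    ring
  rw [exp_pi_div_two_mul_I] at hup
  rw [exp_neg_pi_div_two_mul_I] at hdown
  rw [hup, hdown, harg, harg, show π / 2 / 2 = π / 4 by ring,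
    show -(π / 2) / 2 = -(π / 4) by ring, mul_div_assoc', ← mul_assoc, mul_div_right_comm,
    exp_mul_cpow_div_sq_add_sq, kappaK_eq_phiStrip hs0 hs (Real.exp_pos _)]
  field_simp
  ring

lemma integral_kappaK {s : ℂ} (hs0 : s ≠ 0) (hs : |s.re| < 1) {x : ℝ} (hx : 0 < x) :
    ∫ t in Set.Ioi (0 : ℝ), (t : ℂ) ^ (1 + s / 2) * kappaK t s / ((t : ℂ) ^ 2 + (x : ℂ) ^ 2) =
      π * (x : ℂ) ^ (s / 2) * PhiK x s := by
  obtain ⟨y, rfl⟩ : ∃ y, Real.exp y = x := ⟨Real.log x, Real.exp_log hx⟩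
  rw [integral_Ioi_eq_integral_exp, ← integral_add_right_eq_self _ y]
  simp_rw [exp_mul_kappaK_integrand hs0 hs y]
  rw [integral_const_mul, integral_phiStrip_div_cosh hs, PhiK_eq_phiStrip hs0 hs hx,
    ofReal_exp_cpow, Real.log_exp]
  push_cast
  ring

theorem PhiK_integral_representation
    (s : ℂ) (hs0 : s ≠ 0) (hs1 : -1 < s.re) (hs2 : s.re < 1) (x : ℝ) (hx : 0 < x) :
    PhiK x s
    = ((x : ℂ) ^ (-s / 2) / (π : ℂ)) *
        ∫ t in Set.Ioi (0 : ℝ),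
          (t : ℂ) ^ (1 + s / 2) * kappaK t s / ((t : ℂ) ^ 2 + (x : ℂ) ^ 2) := by
  have hpi : (π : ℂ) ≠ 0 := ofReal_ne_zero.2 Real.pi_ne_zero
  have hx0 : (x : ℂ) ^ (s / 2) ≠ 0 := by simp [cpow_eq_zero_iff, hx.ne']
  rw [integral_kappaK hs0 (abs_lt.2 ⟨hs1, hs2⟩) hx, neg_div, cpow_neg]
  field_simp
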